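/- arXiv:1806.08855 — 8 statements merged into one kernel-verified Lean document; each statement's English description precedes it below -/
import Mathlib

section
/- For any ε > 0 there exists s₀ ∈ ℕ such that the following holds for any integer s ≥ s₀. Let Y be a finite set, l, t positive integers with |Y| ≥ tl, and let F_1, …, F_{s+1} be families of l-element subsets of Y that are cross-dependent and nested. Suppose |F_{s+1}| = α·C(|Y|, l), and that for some reals x, q with 1 ≤ x ≤ s+1 and 1 ≤ q ≤ s+1 one has (α + ε)·t ≤ s·x/q and t ≥ s + x + 1. Then |F_1| + |F_2| + … + |F_s| + q·|F_{s+1}| ≤ s·C(|Y|, l), where C(a,b) denotes the binomial coefficient. -/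
open Finset

/-- Indicator of containing `J`. -/
def chiJ (Y : Finset ℕ) (l : ℕ) (J : Finset ℕ) : ↥(Y.powersetCard l) → ℝ :=
  fun A => if J ⊆ A.1 then 1 else 0

/-- Kneser matrix. -/
def knM (Y : Finset ℕ) (l : ℕ) : Matrix ↥(Y.powersetCard l) ↥(Y.powersetCard l) ℝ :=
  Matrix.of fun A B => if Disjoint A.1 B.1 then 1 else 0

def knW (Y : Finset ℕ) (l j : ℕ) : Submodule ℝ (↥(Y.powersetCard l) → ℝ) :=
  Submodule.span ℝ {f | ∃ J, J ⊆ Y ∧ J.card < j ∧ f = chiJ Y l J}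

lemma kn_mono (Y : Finset ℕ) (l : ℕ) {i j : ℕ} (h : i ≤ j) : knW Y l i ≤ knW Y l j := by
  apply Submodule.span_mono
  rintro f ⟨J, h1, h2, h3⟩
  exact ⟨J, h1, by omega, h3⟩

lemma kn_count (Y : Finset ℕ) (l : ℕ) (J A : Finset ℕ) (hJ : J ⊆ Y) (hJl : J.card ≤ l)
    (hA : A ⊆ Y) (hAl : A.card = l) :
    #{B ∈ Y.powersetCard l | Disjoint A B ∧ J ⊆ B} =
      if Disjoint J A then (#Y - l - #J).choose (l - #J) else 0 := by
  split_ifs with h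
  · have : {B ∈ Y.powersetCard l | Disjoint A B ∧ J ⊆ B} =
        {B ∈ (Y \ A).powersetCard l | J ⊆ B} := by
      ext B
      simp only [mem_filter, mem_powersetCard, subset_sdiff, disjoint_comm (a := A)]
      tauto
    rw [this, card_filter_powersetCard_subset _ _ _ (by rw [subset_sdiff]; exact ⟨hJ, h⟩) hJl,
      card_sdiff_of_subset hA, hAl]
  · rw [card_eq_zero, filter_eq_empty_iff]
    rintro B hB ⟨h1, h2⟩
    exact h ((h1.mono_right h2).symm)

lemma kn_chi (Y : Finset ℕ) (l : ℕ) (J : Finset ℕ) (hJ : J ⊆ Y) (hJl : J.card ≤ l) :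
    (knM Y l).mulVec (chiJ Y l J) =
      ((#Y - l - #J).choose (l - #J) : ℝ) • ∑ I ∈ J.powerset, ((-1 : ℝ) ^ #I) • chiJ Y l I := by
  ext A
  obtain ⟨A, hA⟩ := A
  have hA' := mem_powersetCard.1 hA
  have h1 : (knM Y l).mulVec (chiJ Y l J) ⟨A, hA⟩ =
      (#{B ∈ Y.powersetCard l | Disjoint A B ∧ J ⊆ B} : ℝ) := by
    simp only [Matrix.mulVec, dotProduct, knM, chiJ, Matrix.of_apply]
    rw [card_filter]
    push_cast
    rw [← sum_coe_sort (Y.powersetCard l)]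
    refine sum_congr rfl fun B _ => ?_
    by_cases h : Disjoint A B.1 <;> by_cases h' : J ⊆ B.1 <;> simp [h, h']
  rw [h1, kn_count Y l J A hJ hJl hA'.1 hA'.2]
  have h2 : (∑ I ∈ J.powerset, ((-1 : ℝ) ^ #I) • chiJ Y l I) ⟨A, hA⟩ =
      if Disjoint J A then 1 else 0 := by
    simp only [Finset.sum_apply, Pi.smul_apply, chiJ, smul_eq_mul, mul_ite, mul_one, mul_zero]
    rw [← sum_filter]
    have : {I ∈ J.powerset | I ⊆ A} = (J ∩ A).powerset := by
      ext I; rw [mem_filter, mem_powerset, mem_powerset, subset_inter_iff]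
    rw [this]
    have h3 := @sum_powerset_neg_one_pow_card ℕ _ (J ∩ A)
    have h4 : ((∑ m ∈ (J ∩ A).powerset, (-1) ^ #m : ℤ) : ℝ) =
      ((if J ∩ A = ∅ then 1 else 0 : ℤ) : ℝ) := by rw [h3]
    push_cast at h4
    rw [h4]
    simp [disjoint_iff_inter_eq_empty]
  rw [Pi.smul_apply, h2]
  split_ifs <;> simp

lemma kn_step (Y : Finset ℕ) (l j : ℕ) (hj : j ≤ l) (f : ↥(Y.powersetCard l) → ℝ)
    (hf : f ∈ knW Y l (j + 1)) :
    (knM Y l).mulVec f - ((-1 : ℝ) ^ j * ((#Y - l - j).choose (l - j) : ℝ)) • f ∈ knW Y l j := by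
  unfold knW at hf
  induction hf using Submodule.span_induction with
  | mem f hf =>
    obtain ⟨J, h1, h2, rfl⟩ := hf
    rw [kn_chi Y l J h1 (by omega)]
    rcases Nat.lt_succ_iff_lt_or_eq.1 h2 with h | h
    · apply Submodule.sub_mem
      · apply Submodule.smul_mem
        apply Submodule.sum_mem
        intro I hI
        apply Submodule.smul_mem
        apply Submodule.subset_span
        have hI := mem_powerset.1 hI
        exact ⟨I, hI.trans h1, (card_le_card hI).trans_lt h, rfl⟩
      · apply Submodule.smul_mem
        exact Submodule.subset_span ⟨J, h1, h, rfl⟩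
    · subst h
      rw [mul_comm, mul_smul, ← smul_sub]
      apply Submodule.smul_mem
      rw [← sum_erase_add _ _ (mem_powerset_self J), add_sub_cancel_right]
      apply Submodule.sum_mem
      intro I hI
      apply Submodule.smul_mem
      apply Submodule.subset_span
      have hI1 := mem_powerset.1 (mem_of_mem_erase hI)
      exact ⟨I, hI1.trans h1, card_lt_card (hI1.ssubset_of_ne (ne_of_mem_erase hI)), rfl⟩
  | zero => simp
  | add f g _ _ hf hg =>
    have := Submodule.add_mem _ hf hg
    rw [Matrix.mulVec_add, smul_add]
    convert this using 1
    abel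
  | smul a f _ hf =>
    have := Submodule.smul_mem _ a hf
    rw [Matrix.mulVec_smul, smul_comm _ a, ← smul_sub]
    exact this

lemma kn_top (Y : Finset ℕ) (l : ℕ) (f : ↥(Y.powersetCard l) → ℝ) : f ∈ knW Y l (l + 1) := by
  have : f = ∑ A : ↥(Y.powersetCard l), f A • chiJ Y l A.1 := by
    ext B
    rw [Finset.sum_apply, sum_eq_single B]
    · simp [chiJ]
    · intro A _ hAB
      have : ¬ A.1 ⊆ B.1 := by
        intro h
        apply hAB
        apply Subtype.ext
        apply eq_of_subset_of_card_le h
        rw [(mem_powersetCard.1 A.2).2, (mem_powersetCard.1 B.2).2]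
      simp [chiJ, this]
    · simp
  rw [this]
  apply Submodule.sum_mem
  intro A _
  apply Submodule.smul_mem
  have hA := mem_powersetCard.1 A.2
  exact Submodule.subset_span ⟨A.1, hA.1, by omega, rfl⟩

lemma kn_choose (m l j : ℕ) (hj : 1 ≤ j) (hjl : j ≤ l) (hl : l ≤ m) :
    (m - j).choose (l - j) ≤ (m - 1).choose (l - 1) := by
  induction j, hj using Nat.le_induction with
  | base => rfl
  | succ j hj ih =>
    refine le_trans ?_ (ih (by omega))
    have h1 : m - j = (m - (j + 1)) + 1 := by omega
    have h2 : l - j = (l - (j + 1)) + 1 := by omega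
    rw [h1, h2, Nat.choose_succ_succ]
    omega

lemma kn_eig (Y : Finset ℕ) (l : ℕ) (hY : 2 * l ≤ #Y) (lam : ℝ)
    (hlam : ((#Y - l - 1).choose (l - 1) : ℝ) < lam) (f : ↥(Y.powersetCard l) → ℝ)
    (hs : ∑ A, f A = 0) (hf : (knM Y l).mulVec f = lam • f) : f = 0 := by
  have key : ∀ j, j ≤ l → f ∈ knW Y l (j + 1) → f = 0 := by
    intro j
    induction j with
    | zero =>
      intro _ h
      unfold knW at h
      have hc : ∃ c : ℝ, f = fun _ => c := by
        clear hs hf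
        induction h using Submodule.span_induction with
        | mem f hf =>
          obtain ⟨J, h1, h2, rfl⟩ := hf
          have : J = ∅ := by rw [← card_eq_zero]; omega
          subst this
          exact ⟨1, by ext; simp [chiJ]⟩
        | zero => exact ⟨0, rfl⟩
        | add f g _ _ hf hg =>
          obtain ⟨a, rfl⟩ := hf
          obtain ⟨b, rfl⟩ := hg
          exact ⟨a + b, rfl⟩
        | smul a f _ hf =>
          obtain ⟨b, rfl⟩ := hf
          exact ⟨a * b, rfl⟩
      obtain ⟨c, rfl⟩ := hc
      ext A
      simp only [sum_const, nsmul_eq_mul] at hs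
      rcases mul_eq_zero.1 hs with h | h
      · have : (univ : Finset ↥(Y.powersetCard l)) = ∅ := by
          rw [← card_eq_zero]; exact_mod_cast h
        have h2 := mem_univ A
        rw [this] at h2
        simp at h2
      · simpa using h
    | succ j ih =>
      intro hj h
      apply ih (by omega)
      have h1 := kn_step Y l (j + 1) hj f h
      rw [hf, ← sub_smul] at h1
      refine (Submodule.smul_mem_iff _ ?_).1 h1
      have h2 := kn_choose (#Y - l) l (j + 1) (by omega) hj (by omega)
      have h3 : ((#Y - l - (j + 1)).choose (l - (j + 1)) : ℝ) < lam :=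
        lt_of_le_of_lt (by exact_mod_cast h2) hlam
      have h4 : (0 : ℝ) ≤ ((#Y - l - (j + 1)).choose (l - (j + 1)) : ℝ) := by positivity
      rcases neg_one_pow_eq_or ℝ (j + 1) with h | h <;> rw [h] <;> intro h5 <;> linarith
  exact key l le_rfl (kn_top Y l f)

lemma kn_row (Y : Finset ℕ) (l : ℕ) (A : ↥(Y.powersetCard l)) :
    ∑ B, knM Y l A B = ((#Y - l).choose l : ℝ) := by
  have h := congrFun (kn_chi Y l ∅ (by simp) (by simp)) A
  simpa [Matrix.mulVec, dotProduct, chiJ] using h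

lemma kn_symm (Y : Finset ℕ) (l : ℕ) (A B : ↥(Y.powersetCard l)) :
    knM Y l A B = knM Y l B A := by
  simp [knM, disjoint_comm]

lemma kn_psd (Y : Finset ℕ) (l : ℕ) (hl : 0 < l) (hY : 2 * l ≤ #Y)
    (f : ↥(Y.powersetCard l) → ℝ) :
    ∑ A, f A * (knM Y l).mulVec f A ≤
      ((#Y - l - 1).choose (l - 1) : ℝ) * ∑ A, f A ^ 2 +
      ((#Y - l).choose l : ℝ) / ((#Y).choose l : ℝ) * (∑ A, f A) ^ 2 := by
  classical
  set c1 : ℝ := ((#Y - l - 1).choose (l - 1) : ℝ) with hc1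
  set c0 : ℝ := ((#Y - l).choose l : ℝ) with hc0
  set N : ℝ := ((#Y).choose l : ℝ) with hN
  have hN0 : 0 < N := by
    rw [hN]; exact_mod_cast Nat.choose_pos (by omega)
  have hcard : (Fintype.card ↥(Y.powersetCard l) : ℝ) = N := by simp [hN]
  let M : Matrix ↥(Y.powersetCard l) ↥(Y.powersetCard l) ℝ :=
    c1 • (1 : Matrix _ _ ℝ) - knM Y l + Matrix.of fun _ _ => c0 / N
  have hMv : ∀ v A, M.mulVec v A = c1 * v A - (knM Y l).mulVec v A + c0 / N * ∑ B, v B := by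
    intro v A
    simp only [M, Matrix.add_mulVec, Matrix.sub_mulVec, Matrix.smul_mulVec, Matrix.one_mulVec,
      Pi.add_apply, Pi.sub_apply, Pi.smul_apply, smul_eq_mul]
    congr 1
    simp [Matrix.mulVec, dotProduct, mul_sum]
  have hM : M.IsHermitian := by
    ext A B
    simp only [M, Matrix.conjTranspose_apply, Matrix.add_apply, Matrix.sub_apply,
      Matrix.smul_apply, Matrix.of_apply, star_trivial, kn_symm Y l B A, Matrix.one_apply,
      eq_comm (a := B)]
  have hsum : ∀ v, ∑ A, (knM Y l).mulVec v A = c0 * ∑ A, v A := by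
    intro v
    simp only [Matrix.mulVec, dotProduct]
    rw [sum_comm, mul_sum]
    refine sum_congr rfl fun B _ => ?_
    rw [← sum_mul]
    simp_rw [kn_symm Y l _ B]
    rw [kn_row]
  have hpsd : M.PosSemidef := by
    rw [hM.posSemidef_iff_eigenvalues_nonneg]
    intro i
    by_contra hneg
    simp only [Pi.zero_apply, not_le] at hneg
    set mu := hM.eigenvalues i
    have hv := hM.mulVec_eigenvectorBasis i
    set v : ↥(Y.powersetCard l) → ℝ := (hM.eigenvectorBasis i).ofLp with hvdef
    have hv' : ∀ A, c1 * v A - (knM Y l).mulVec v A + c0 / N * ∑ B, v B = mu * v A := by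
      intro A
      rw [← hMv, hv]; rfl
    have hs0 : ∑ A, v A = 0 := by
      have h1 : ∑ A, (c1 * v A - (knM Y l).mulVec v A + c0 / N * ∑ B, v B) = ∑ A, mu * v A :=
        sum_congr rfl fun A _ => hv' A
      rw [sum_add_distrib, sum_sub_distrib, hsum, ← mul_sum, ← mul_sum, sum_const, card_univ,
        nsmul_eq_mul, hcard] at h1
      have h2 : c0 / N * (N * ∑ B, v B) = c0 * ∑ B, v B := by field_simp
      rw [h2] at h1
      have h3 : (c1 - mu) * ∑ A, v A = 0 := by
        rw [← mul_sum] at h1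
        linarith
      have h4 : 0 ≤ c1 := by rw [hc1]; positivity
      rcases mul_eq_zero.1 h3 with h | h
      · linarith
      · exact h
    have hv0 : v = 0 := by
      apply kn_eig Y l hY (c1 - mu) (by linarith) v hs0
      ext A
      have := hv' A
      rw [hs0] at this
      simp only [Pi.smul_apply, smul_eq_mul]
      linarith
    have hne : hM.eigenvectorBasis i ≠ 0 := by
      intro h
      have := hM.eigenvectorBasis.norm_eq_one i
      rw [h] at this
      simp at this
    apply hne
    ext A
    exact congrFun hv0 A
  have h := hpsd.dotProduct_mulVec_nonneg f
  simp only [dotProduct, hMv, star_trivial] at h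
  have h2 : ∑ A, f A * (c1 * f A - (knM Y l).mulVec f A + c0 / N * ∑ B, f B) =
      c1 * ∑ A, f A ^ 2 - ∑ A, f A * (knM Y l).mulVec f A + c0 / N * (∑ A, f A) ^ 2 := by
    have h3 : ∀ S : ℝ, ∑ A, f A * (c1 * f A - (knM Y l).mulVec f A + c0 / N * S) =
        c1 * ∑ A, f A ^ 2 - ∑ A, f A * (knM Y l).mulVec f A + (∑ A, f A) * (c0 / N * S) := by
      intro S
      rw [sum_mul, mul_sum, ← sum_sub_distrib, ← sum_add_distrib]
      refine sum_congr rfl fun A _ => ?_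
      ring
    rw [h3]
    ring
  rw [h2] at h
  linarith

lemma kn_pairs (Y : Finset ℕ) (l : ℕ) (hl : 0 < l) (hY : 2 * l ≤ #Y)
    (F : Finset (Finset ℕ)) (hF : F ⊆ Y.powersetCard l) :
    (∑ p ∈ Y.powersetCard l ×ˢ Y.powersetCard l with Disjoint p.1 p.2,
      (if p.1 ∈ F then (1 : ℝ) else 0) * (if p.2 ∈ F then (1 : ℝ) else 0)) ≤
      ((#Y - l - 1).choose (l - 1) : ℝ) * #F +
      ((#Y - l).choose l : ℝ) / ((#Y).choose l : ℝ) * (#F : ℝ) ^ 2 := by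
  classical
  have h := kn_psd Y l hl hY (fun A => if A.1 ∈ F then 1 else 0)
  have h1 : ∑ A : ↥(Y.powersetCard l), (if A.1 ∈ F then (1 : ℝ) else 0) = #F := by
    rw [sum_coe_sort (Y.powersetCard l) (fun A => if A ∈ F then (1 : ℝ) else 0)]
    rw [sum_boole, filter_mem_eq_inter, inter_eq_right.2 hF]
  have h2 : ∑ A : ↥(Y.powersetCard l), (if A.1 ∈ F then (1 : ℝ) else 0) ^ 2 = #F := by
    rw [← h1]
    refine sum_congr rfl fun A _ => ?_
    split_ifs <;> simp
  rw [h1, h2] at h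
  refine le_trans (le_of_eq ?_) h
  rw [sum_filter, sum_product, ← sum_coe_sort (Y.powersetCard l)]
  refine sum_congr rfl fun A _ => ?_
  simp only [Matrix.mulVec, dotProduct, knM, Matrix.of_apply]
  rw [mul_sum, ← sum_coe_sort (Y.powersetCard l)]
  refine sum_congr rfl fun B _ => ?_
  by_cases h : Disjoint A.1 B.1 <;> simp [h]

lemma hall_nested (s t : ℕ) (T : ℕ → Finset (Fin t))
    (hn : ∀ i ∈ Finset.Icc 1 s, T (i + 1) ⊆ T i)
    (h : ¬ ∃ f : Fin (s + 1) → Fin t, Function.Injective f ∧ ∀ i : Fin (s + 1), f i ∈ T (i.1 + 1)) :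
    ∃ j ≤ s, #(T (s + 1)) ≤ j ∧ ∑ i ∈ Finset.Icc 1 s, #(T i) ≤ (s - j) * t + j * j := by
  classical
  have hanti : ∀ i k, 1 ≤ i → i ≤ k → k ≤ s + 1 → T k ⊆ T i := by
    intro i k hi hik
    induction k, hik using Nat.le_induction with
    | base => intro _; exact subset_rfl
    | succ k hk ih =>
      intro hks
      exact (hn k (by rw [mem_Icc]; omega)).trans (ih (by omega))
  rw [← Finset.all_card_le_biUnion_card_iff_exists_injective
    (fun i : Fin (s + 1) => T (i.1 + 1))] at h
  push Not at h
  obtain ⟨S, hS⟩ := h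
  have hne : S.Nonempty := by
    rw [nonempty_iff_ne_empty]; rintro rfl; simp at hS
  set m := S.min' hne with hm
  have hmS : m ∈ S := S.min'_mem hne
  have h1 : #(T (m.1 + 1)) ≤ #(S.biUnion fun i : Fin (s + 1) => T (i.1 + 1)) :=
    card_le_card (subset_biUnion_of_mem (fun i : Fin (s + 1) => T (i.1 + 1)) hmS)
  have h2 : #S ≤ s + 1 - m.1 := by
    have : S ⊆ Finset.Ici m := fun i hi => mem_Ici.2 (S.min'_le i hi)
    have := card_le_card this
    simpa using this
  have hm' := m.2
  have key : #(T (m.1 + 1)) ≤ s - m.1 := by omega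
  refine ⟨s - m.1, by omega, ?_, ?_⟩
  · exact (card_le_card (hanti (m.1 + 1) (s + 1) (by omega) (by omega) le_rfl)).trans key
  · have hle : ∀ i ∈ Finset.Icc 1 s, #(T i) ≤ if i ≤ m.1 then t else s - m.1 := by
      intro i hi
      rw [mem_Icc] at hi
      split_ifs with h
      · exact (card_le_univ _).trans (by simp)
      · exact (card_le_card (hanti (m.1 + 1) i (by omega) (by omega) (by omega))).trans key
    refine (sum_le_sum hle).trans ?_
    rw [sum_ite, sum_const, sum_const, smul_eq_mul, smul_eq_mul]
    have e1 : {i ∈ Finset.Icc 1 s | i ≤ m.1} = Finset.Icc 1 m.1 := by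
      ext i; simp only [mem_filter, mem_Icc]; omega
    have e2 : {i ∈ Finset.Icc 1 s | ¬ i ≤ m.1} = Finset.Icc (m.1 + 1) s := by
      ext i; simp only [mem_filter, mem_Icc]; omega
    rw [e1, e2, Nat.card_Icc, Nat.card_Icc]
    have e3 : m.1 + 1 - 1 = s - (s - m.1) := by omega
    have e4 : s + 1 - (m.1 + 1) = s - m.1 := by omega
    rw [e3, e4]

lemma num_bound (s t j h x q a k : ℝ) (h0 : 0 ≤ h) (hj : h ≤ j) (js : j ≤ s) (hx : 1 ≤ x)
    (xq : x ≤ q) (qs : q ≤ s + 1) (hk : 0 < k) (ha0 : 0 ≤ a) (ha1 : a ≤ 1)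
    (hat : (a + 2 * k) * t ≤ s * x / q) (ht : s + x + 1 ≤ t) :
    q * (k * h - (1 + k) ^ 2 / (k ^ 2 * t) * (h - a * t) ^ 2) ≤ j * (t - j) - q * h := by
  have hq : 0 < q := by linarith
  have ht0 : 0 < t := by linarith
  have hjt : 0 ≤ j * (t - j) := mul_nonneg (by linarith) (by linarith)
  by_cases hg : h ≤ (a + k) * t
  · have h1 : 0 ≤ (1 + k) ^ 2 / (k ^ 2 * t) * (h - a * t) ^ 2 := by positivity
    have h2 : q * (k * h - (1 + k) ^ 2 / (k ^ 2 * t) * (h - a * t) ^ 2) ≤ q * (k * h) :=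
      mul_le_mul_of_nonneg_left (by linarith) hq.le
    refine h2.trans ?_
    have hu : h ≤ s * x / q - k * t := by linarith
    have hqu : q * (s * x / q) = s * x := by field_simp
    have hL : q * (k * h) ≤ h * (t - h) - q * h := by
      have h3 : s + x + 1 - s * x / q - q ≥ 0 := by
        have : q * (s + x + 1 - s * x / q - q) ≥ 0 := by
          have : q * (s + x + 1 - s * x / q - q) = (q - x) * (s + 1 - q) + x := by
            rw [mul_sub, mul_sub, hqu]; ring
          rw [this]
          have := mul_nonneg (sub_nonneg.2 xq) (sub_nonneg.2 qs)
          linarith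
        exact nonneg_of_mul_nonneg_right this hq
      have h4 : k * t ≤ t - h - q := by linarith
      have h5 : k * q ≤ k * t := mul_le_mul_of_nonneg_left (by linarith) hk.le
      have h6 : h * (k * q) ≤ h * (t - h - q) := mul_le_mul_of_nonneg_left (by linarith) h0
      linarith
    have hR : q * (k * h) ≤ s * (t - s) - q * h := by
      have h3 : q * h ≤ s * x - q * (k * t) := by
        have := mul_le_mul_of_nonneg_left hu hq.le
        rw [mul_sub, hqu] at this
        exact this
      have h4 : q * (k * h) ≤ q * (k * t) := by
        apply mul_le_mul_of_nonneg_left _ hq.le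
        exact mul_le_mul_of_nonneg_left (by linarith) hk.le
      have h5 : s * x ≤ s * (t - s) := mul_le_mul_of_nonneg_left (by linarith) (by linarith)
      linarith
    rcases le_total (j + h) t with h7 | h7
    · have := mul_nonneg (sub_nonneg.2 hj) (sub_nonneg.2 h7)
      nlinarith
    · have h8 : t ≤ j + s := by linarith
      have := mul_nonneg (sub_nonneg.2 js) (sub_nonneg.2 h8)
      nlinarith
  · push Not at hg
    have hD : k * t < h - a * t := by linarith
    set D := h - a * t with hDdef
    have hD0 : 0 < D := lt_trans (by positivity) hD
    have h1 : h ≤ D * ((1 + k) / k) := by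
      have : D * ((1 + k) / k) = D + D / k := by field_simp; ring
      rw [this]
      have : t ≤ D / k := by rw [le_div_iff₀ hk]; linarith
      have : a * t ≤ t := by nlinarith
      linarith
    have h2 : D ≤ D ^ 2 / (k * t) := by
      rw [le_div_iff₀ (by positivity), sq]
      exact mul_le_mul_of_nonneg_left hD.le hD0.le
    have h3 : (1 + k) * h ≤ (1 + k) ^ 2 / (k ^ 2 * t) * D ^ 2 := by
      calc (1 + k) * h ≤ (1 + k) * (D ^ 2 / (k * t) * ((1 + k) / k)) := by
            apply mul_le_mul_of_nonneg_left _ (by linarith)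
            exact h1.trans (mul_le_mul_of_nonneg_right h2 (by positivity))
        _ = _ := by field_simp
    have h4 : q * (k * h - (1 + k) ^ 2 / (k ^ 2 * t) * D ^ 2) ≤ q * (-h) :=
      mul_le_mul_of_nonneg_left (by linarith) hq.le
    linarith

/-- Image of a block. -/
def imB {Y : Finset ℕ} (e : Fin #Y ≃ ↥Y) (P : Finset (Fin #Y)) : Finset ℕ :=
  P.image fun m => (e m : ℕ)

lemma imB_inj {Y : Finset ℕ} (e : Fin #Y ≃ ↥Y) :
    Function.Injective fun m => (e m : ℕ) :=
  Subtype.val_injective.comp e.injective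

lemma imB_card {Y : Finset ℕ} (e : Fin #Y ≃ ↥Y) (P : Finset (Fin #Y)) : #(imB e P) = #P :=
  card_image_of_injective _ (imB_inj e)

lemma imB_sub {Y : Finset ℕ} (e : Fin #Y ≃ ↥Y) (P : Finset (Fin #Y)) : imB e P ⊆ Y := by
  intro y hy
  obtain ⟨m, _, rfl⟩ := mem_image.1 hy
  exact (e m).2

lemma imB_disj {Y : Finset ℕ} (e : Fin #Y ≃ ↥Y) {P Q : Finset (Fin #Y)} (h : Disjoint P Q) :
    Disjoint (imB e P) (imB e Q) :=
  (disjoint_image (imB_inj e)).2 h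

lemma imB_trans {Y : Finset ℕ} (e : Fin #Y ≃ ↥Y) (σ : Fin #Y ≃ Fin #Y) (P : Finset (Fin #Y)) :
    imB (σ.trans e) P = imB e (P.image σ) := by
  simp [imB, image_image, Function.comp_def]

lemma imB_eq_iff {Y : Finset ℕ} (e : Fin #Y ≃ ↥Y) {P Q : Finset (Fin #Y)} :
    imB e P = imB e Q ↔ P = Q :=
  (image_injective (imB_inj e)).eq_iff

lemma imB_exists {Y : Finset ℕ} (P Q : Finset (Fin #Y)) (hPQ : Disjoint P Q)
    (A B : Finset ℕ) (hA : A ⊆ Y) (hB : B ⊆ Y) (hAB : Disjoint A B) (hPA : #A = #P)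
    (hQB : #B = #Q) : ∃ e : Fin #Y ≃ ↥Y, imB e P = A ∧ imB e Q = B := by
  classical
  let eP : P ≃ A := Finset.equivOfCardEq hPA.symm
  let eQ : Q ≃ B := Finset.equivOfCardEq hQB.symm
  let f : Fin #Y → ℕ := fun m => if h : m ∈ P then eP ⟨m, h⟩ else if h : m ∈ Q then eQ ⟨m, h⟩ else 0
  have fP : ∀ m (h : m ∈ P), f m = eP ⟨m, h⟩ := fun m h => by simp [f, h]
  have fQ : ∀ m (h : m ∈ Q), f m = eQ ⟨m, h⟩ := fun m h => by
    have : m ∉ P := fun h' => (disjoint_left.1 hPQ h') h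
    simp [f, h, this]
  have fPA : ∀ m ∈ P, f m ∈ A := fun m h => by rw [fP m h]; exact (eP _).2
  have fQB : ∀ m ∈ Q, f m ∈ B := fun m h => by rw [fQ m h]; exact (eQ _).2
  have h1 : image f (P ∪ Q) ⊆ Y := by
    intro y hy
    obtain ⟨m, hm, rfl⟩ := mem_image.1 hy
    rcases mem_union.1 hm with h | h
    · exact hA (fPA m h)
    · exact hB (fQB m h)
  have h2 : Set.InjOn f ↑(P ∪ Q) := by
    intro m hm m' hm' hmm
    rw [mem_coe, mem_union] at hm hm'
    rcases hm with h | h <;> rcases hm' with h' | h'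
    · rw [fP m h, fP m' h'] at hmm
      simpa using eP.injective (Subtype.ext hmm)
    · exact absurd (hmm ▸ fPA m h) (fun h3 => disjoint_left.1 hAB h3 (fQB m' h'))
    · exact absurd (hmm ▸ fQB m h) (fun h3 => disjoint_left.1 hAB (fPA m' h') h3)
    · rw [fQ m h, fQ m' h'] at hmm
      simpa using eQ.injective (Subtype.ext hmm)
  obtain ⟨e, he⟩ := exists_equiv_extend_of_card_eq (by simp) h1 h2
  refine ⟨e, ?_, ?_⟩
  · apply eq_of_subset_of_card_le
    · intro y hy
      obtain ⟨m, hm, rfl⟩ := mem_image.1 hy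
      rw [he m (mem_union_left _ hm)]
      exact fPA m hm
    · rw [imB_card, hPA]
  · apply eq_of_subset_of_card_le
    · intro y hy
      obtain ⟨m, hm, rfl⟩ := mem_image.1 hy
      rw [he m (mem_union_right _ hm)]
      exact fQB m hm
    · rw [imB_card, hQB]

lemma pairs_card (Y : Finset ℕ) (l m : ℕ) :
    #{p ∈ Y.powersetCard l ×ˢ Y.powersetCard m | Disjoint p.1 p.2} =
      (#Y).choose l * (#Y - l).choose m := by
  classical
  rw [card_filter, sum_product]
  rw [← card_powersetCard l Y, ← smul_eq_mul, ← sum_const]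
  refine sum_congr rfl fun A hA => ?_
  have hA := mem_powersetCard.1 hA
  rw [← card_filter]
  have : {B ∈ Y.powersetCard m | Disjoint A B} = (Y \ A).powersetCard m := by
    ext B
    simp only [mem_filter, mem_powersetCard, subset_sdiff, disjoint_comm (a := A)]
    tauto
  rw [this, card_powersetCard, card_sdiff_of_subset hA.1, hA.2]

lemma avg_pair (Y : Finset ℕ) (P Q : Finset (Fin #Y)) (hPQ : Disjoint P Q)
    (f : Finset ℕ → Finset ℕ → ℝ) :
    (∑ e : Fin #Y ≃ ↥Y, f (imB e P) (imB e Q)) * ((#Y).choose #P * (#Y - #P).choose #Q : ℕ) =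
      (Fintype.card (Fin #Y ≃ ↥Y) : ℝ) *
        ∑ p ∈ Y.powersetCard #P ×ˢ Y.powersetCard #Q with Disjoint p.1 p.2, f p.1 p.2 := by
  classical
  have hmaps : ∀ e ∈ (univ : Finset (Fin #Y ≃ ↥Y)), (imB e P, imB e Q) ∈
      {p ∈ Y.powersetCard #P ×ˢ Y.powersetCard #Q | Disjoint p.1 p.2} := by
    intro e _
    simp [imB_sub, imB_card, imB_disj e hPQ]
  set K : ℕ := #{σ : Fin #Y ≃ Fin #Y | P.image σ = P ∧ Q.image σ = Q} with hK
  have main : ∀ g : Finset ℕ → Finset ℕ → ℝ, ∑ e : Fin #Y ≃ ↥Y, g (imB e P) (imB e Q) =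
      K * ∑ p ∈ Y.powersetCard #P ×ˢ Y.powersetCard #Q with Disjoint p.1 p.2, g p.1 p.2 := by
    intro g
    rw [← sum_fiberwise_of_maps_to hmaps, mul_sum]
    refine sum_congr rfl fun p hp => ?_
    rw [mem_filter, mem_product, mem_powersetCard, mem_powersetCard] at hp
    obtain ⟨⟨⟨a1, a2⟩, b1, b2⟩, ab⟩ := hp
    obtain ⟨e0, he1, he2⟩ := imB_exists P Q hPQ p.1 p.2 a1 b1 ab a2 b2
    have hcard : #{e : Fin #Y ≃ ↥Y | (imB e P, imB e Q) = p} = K := by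
      symm
      apply card_bij (fun σ _ => σ.trans e0)
      · intro σ hσ
        rw [mem_filter] at hσ ⊢
        refine ⟨mem_univ _, ?_⟩
        rw [imB_trans, imB_trans, hσ.2.1, hσ.2.2, he1, he2]
      · intro σ _ σ' _ h
        ext m
        have := congrArg (fun e => e0.symm (e m)) h
        simpa using congrArg Fin.val this
      · intro e he
        rw [mem_filter] at he
        have h1 := congrArg Prod.fst he.2
        have h2 := congrArg Prod.snd he.2
        have h3 : (e.trans e0.symm).trans e0 = e := by ext; simp
        refine ⟨e.trans e0.symm, ?_, h3⟩
        rw [mem_filter]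
        refine ⟨mem_univ _, ?_, ?_⟩
        · rw [← imB_eq_iff e0, ← imB_trans, h3, he1]; exact h1
        · rw [← imB_eq_iff e0, ← imB_trans, h3, he2]; exact h2
    rw [← hcard, ← nsmul_eq_mul, ← sum_const]
    refine sum_congr rfl fun e he => ?_
    rw [mem_filter] at he
    rw [← he.2]
  have h1 := main fun _ _ => 1
  rw [sum_const, sum_const, pairs_card, card_univ, nsmul_eq_mul, nsmul_eq_mul, mul_one,
    mul_one] at h1
  rw [main f, h1]
  ring

lemma avg_single (Y : Finset ℕ) (P : Finset (Fin #Y)) (F : Finset (Finset ℕ))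
    (hF : F ⊆ Y.powersetCard #P) :
    (∑ e : Fin #Y ≃ ↥Y, if imB e P ∈ F then (1 : ℝ) else 0) * ((#Y).choose #P : ℝ) =
      (Fintype.card (Fin #Y ≃ ↥Y) : ℝ) * #F := by
  classical
  have h := avg_pair Y P ∅ (by simp) (fun A _ => if A ∈ F then (1 : ℝ) else 0)
  simp only [card_empty, Nat.choose_zero_right, mul_one] at h
  rw [h]
  congr 1
  rw [sum_filter, sum_product]
  simp only [powersetCard_zero, sum_singleton, disjoint_empty_right, if_true]
  rw [sum_boole, filter_mem_eq_inter, inter_eq_right.2 hF]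

lemma c_ratio (n l t : ℕ) (hl : 0 < l) (h2 : 2 * l ≤ n) (ht : t * l ≤ n) (ht0 : 0 < t) :
    ((n - l - 1).choose (l - 1) : ℝ) ≤ 2 / t * ((n - l).choose l : ℝ) := by
  have h := Nat.add_one_mul_choose_eq (n - l - 1) (l - 1)
  rw [Nat.sub_add_cancel (by omega), Nat.sub_add_cancel (by omega)] at h
  have ht' : (0 : ℝ) < t := by exact_mod_cast ht0
  rw [div_mul_eq_mul_div, le_div_iff₀ ht']
  have h3 : t * l ≤ 2 * (n - l) := by omega
  have h4 : (n - l - 1).choose (l - 1) * t * l ≤ 2 * (n - l).choose l * l := by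
    calc (n - l - 1).choose (l - 1) * t * l = (n - l - 1).choose (l - 1) * (t * l) := by ring
      _ ≤ (n - l - 1).choose (l - 1) * (2 * (n - l)) := Nat.mul_le_mul_left _ h3
      _ = 2 * ((n - l) * (n - l - 1).choose (l - 1)) := by ring
      _ = 2 * (n - l).choose l * l := by rw [h]; ring
  exact_mod_cast Nat.le_of_mul_le_mul_right h4 hl

lemma second_moment (Y : Finset ℕ) (l t : ℕ) (hl : 0 < l) (h2 : 2 * l ≤ #Y) (ht : t * l ≤ #Y)
    (ht0 : 0 < t) (P : Fin t → Finset (Fin #Y)) (hPc : ∀ k, #(P k) = l)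
    (hPd : ∀ k k', k ≠ k' → Disjoint (P k) (P k'))
    (F : Finset (Finset ℕ)) (hF : F ⊆ Y.powersetCard l) (a : ℝ)
    (ha : (#F : ℝ) = a * ((#Y).choose l : ℝ)) :
    ∑ e : Fin #Y ≃ ↥Y, (∑ k, if imB e (P k) ∈ F then (1 : ℝ) else 0) ^ 2 ≤
      (Fintype.card (Fin #Y ≃ ↥Y) : ℝ) * (a ^ 2 * t ^ 2 + 3 * a * t) := by
  classical
  set E : ℝ := (Fintype.card (Fin #Y ≃ ↥Y) : ℝ) with hE
  have hE0 : 0 ≤ E := by rw [hE]; positivity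
  set N : ℝ := ((#Y).choose l : ℝ) with hN
  have hN0 : 0 < N := by rw [hN]; exact_mod_cast Nat.choose_pos (by omega)
  set c0 : ℝ := ((#Y - l).choose l : ℝ) with hc0
  have hc00 : 0 < c0 := by rw [hc0]; exact_mod_cast Nat.choose_pos (by omega)
  have ht' : (0 : ℝ) < t := by exact_mod_cast ht0
  have ha0 : 0 ≤ a := by
    have : 0 ≤ a * N := by rw [← ha]; positivity
    exact nonneg_of_mul_nonneg_left this hN0
  have hterm : ∀ k k', (∑ e : Fin #Y ≃ ↥Y, (if imB e (P k) ∈ F then (1 : ℝ) else 0) *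
      (if imB e (P k') ∈ F then (1 : ℝ) else 0)) ≤
      E * (a ^ 2 + a * (2 / t)) + if k = k' then E * a else 0 := by
    intro k k'
    by_cases hk : k = k'
    · subst hk
      rw [if_pos rfl]
      have h1 := avg_single Y (P k) F (by rw [hPc]; exact hF)
      rw [hPc, ha, ← hN, ← hE, ← mul_assoc] at h1
      have h1 := mul_right_cancel₀ hN0.ne' h1
      have h3 : (∑ e : Fin #Y ≃ ↥Y, (if imB e (P k) ∈ F then (1 : ℝ) else 0) *
          (if imB e (P k) ∈ F then (1 : ℝ) else 0)) = E * a := by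
        rw [← h1]
        refine sum_congr rfl fun e _ => ?_
        split_ifs <;> simp
      rw [h3]
      have : 0 ≤ E * (a ^ 2 + a * (2 / t)) := by positivity
      linarith
    · rw [if_neg hk, add_zero]
      have h1 := avg_pair Y (P k) (P k') (hPd k k' hk)
        (fun A B => (if A ∈ F then (1 : ℝ) else 0) * (if B ∈ F then (1 : ℝ) else 0))
      rw [hPc, hPc] at h1
      have h3 := kn_pairs Y l hl h2 F hF
      have h4 := c_ratio #Y l t hl h2 ht ht0
      rw [← hc0] at h3 h4
      rw [← hN, ha] at h3
      push_cast at h1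
      rw [← hN, ← hc0, ← hE] at h1
      have h5 : 0 < N * c0 := by positivity
      refine le_of_mul_le_mul_right ?_ h5
      rw [h1, mul_assoc]
      apply mul_le_mul_of_nonneg_left _ hE0
      refine h3.trans ?_
      have h6 := mul_le_mul_of_nonneg_right h4 (show 0 ≤ a * N by positivity)
      have h7 : c0 / N * (a * N) ^ 2 = a ^ 2 * (N * c0) := by field_simp
      rw [h7]
      linarith
  have hexp : ∑ e : Fin #Y ≃ ↥Y, (∑ k, if imB e (P k) ∈ F then (1 : ℝ) else 0) ^ 2 =
      ∑ k, ∑ k', ∑ e : Fin #Y ≃ ↥Y, (if imB e (P k) ∈ F then (1 : ℝ) else 0) *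
      (if imB e (P k') ∈ F then (1 : ℝ) else 0) := by
    simp_rw [sq, sum_mul_sum]
    rw [sum_comm]
    refine sum_congr rfl fun k _ => ?_
    rw [sum_comm]
  rw [hexp]
  refine (sum_le_sum fun k _ => sum_le_sum fun k' _ => hterm k k').trans (le_of_eq ?_)
  simp only [sum_add_distrib, sum_const, card_univ, Fintype.card_fin, nsmul_eq_mul, sum_ite_eq,
    mem_univ, if_true]
  field_simp
  ring

theorem cross_dependent_size_bound :
    ∀ ε : ℝ, 0 < ε → ∃ s₀ : ℕ, ∀ s : ℕ, s₀ ≤ s →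
    ∀ (Y : Finset ℕ) (l t : ℕ), 0 < l → 0 < t → t * l ≤ Y.card →
    ∀ F : ℕ → Finset (Finset ℕ),
      (∀ i ∈ Finset.Icc 1 (s + 1), ∀ A ∈ F i, A ⊆ Y ∧ A.card = l) →
      (∀ i ∈ Finset.Icc 1 s, F (i + 1) ⊆ F i) →
      (¬ ∃ g : ℕ → Finset ℕ,
        (∀ i ∈ Finset.Icc 1 (s + 1), g i ∈ F i) ∧
        ∀ i ∈ Finset.Icc 1 (s + 1), ∀ j ∈ Finset.Icc 1 (s + 1), i ≠ j →
          Disjoint (g i) (g j)) →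
    ∀ α x q : ℝ,
      ((F (s + 1)).card : ℝ) = α * (Y.card.choose l : ℝ) →
      1 ≤ x → x ≤ (s : ℝ) + 1 → 1 ≤ q → q ≤ (s : ℝ) + 1 →
      (α + ε) * t ≤ (s : ℝ) * x / q → (s : ℝ) + x + 1 ≤ (t : ℝ) →
      (∑ i ∈ Finset.Icc 1 s, ((F i).card : ℝ)) + q * ((F (s + 1)).card : ℝ) ≤
        (s : ℝ) * (Y.card.choose l : ℝ) := by
  intro ε hε
  set κ : ℝ := ε / 2 with hκ
  have hκ0 : 0 < κ := by positivity
  refine ⟨⌈3 * (1 + κ) ^ 2 / κ ^ 3⌉₊, ?_⟩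
  intro s hs Y l t hl ht0 htY F hF hnest hcross α x q hα hx1 hx2 hq1 hq2 hat ht
  classical
  have hs' : 3 * (1 + κ) ^ 2 / κ ^ 3 ≤ (s : ℝ) := Nat.ceil_le.1 hs
  have ht' : (0 : ℝ) < t := by exact_mod_cast ht0
  have hst : s + 2 ≤ t := by
    have : (s : ℝ) + 2 ≤ t := by linarith
    exact_mod_cast this
  have h2l : 2 * l ≤ #Y := le_trans (Nat.mul_le_mul_right l (by omega)) htY
  have hFs : ∀ i ∈ Finset.Icc 1 (s + 1), F i ⊆ Y.powersetCard l := fun i hi A hA =>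
    mem_powersetCard.2 (hF i hi A hA)
  have hl1 : s + 1 ∈ Finset.Icc 1 (s + 1) := by simp
  set N : ℝ := ((#Y).choose l : ℝ) with hN
  have hN0 : 0 < N := by rw [hN]; exact_mod_cast Nat.choose_pos (by omega)
  have hα0 : 0 ≤ α := by
    have : 0 ≤ α * N := by rw [← hα]; positivity
    exact nonneg_of_mul_nonneg_left this hN0
  have hα1 : α ≤ 1 := by
    have h1 := card_le_card (hFs _ hl1)
    rw [card_powersetCard] at h1
    have h2 : α * N ≤ 1 * N := by rw [← hα, one_mul, hN]; exact_mod_cast h1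
    exact le_of_mul_le_mul_right h2 hN0
  -- blocks
  have hbd : ∀ k : Fin t, ∀ m ∈ Finset.Ico (k.1 * l) ((k.1 + 1) * l), m < #Y := by
    intro k m hm
    rw [mem_Ico] at hm
    exact lt_of_lt_of_le hm.2 (le_trans (Nat.mul_le_mul_right l k.2) htY)
  let P : Fin t → Finset (Fin #Y) := fun k =>
    (Finset.Ico (k.1 * l) ((k.1 + 1) * l)).attachFin (hbd k)
  have hPc : ∀ k, #(P k) = l := by
    intro k
    simp only [P, card_attachFin, Nat.card_Ico]
    rw [add_mul, one_mul, Nat.add_sub_cancel_left]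
  have hPd : ∀ k k', k ≠ k' → Disjoint (P k) (P k') := by
    intro k k' hk
    rw [disjoint_left]
    intro m hm hm'
    simp only [P, mem_attachFin, mem_Ico] at hm hm'
    apply hk
    have h1 : k.1 < k'.1 + 1 := lt_of_mul_lt_mul_right (hm.1.trans_lt hm'.2) (Nat.zero_le l)
    have h2 : k'.1 < k.1 + 1 := lt_of_mul_lt_mul_right (hm'.1.trans_lt hm.2) (Nat.zero_le l)
    apply Fin.ext
    omega
  set E : ℝ := (Fintype.card (Fin #Y ≃ ↥Y) : ℝ) with hE
  have hE0 : 0 < E := by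
    rw [hE]
    have : Nonempty (Fin #Y ≃ ↥Y) := ⟨Y.equivFin.symm⟩
    exact_mod_cast Fintype.card_pos
  let T : (Fin #Y ≃ ↥Y) → ℕ → Finset (Fin t) := fun e i => {k | imB e (P k) ∈ F i}
  have hT : ∀ e i, (#(T e i) : ℝ) = ∑ k, if imB e (P k) ∈ F i then (1 : ℝ) else 0 := by
    intro e i
    simp [T]
  have hfirst : ∀ i ∈ Finset.Icc 1 (s + 1), (∑ e, (#(T e i) : ℝ)) * N = E * t * #(F i) := by
    intro i hi
    simp_rw [hT]
    rw [sum_comm, sum_mul]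
    have : ∀ k ∈ (univ : Finset (Fin t)),
        (∑ e : Fin #Y ≃ ↥Y, if imB e (P k) ∈ F i then (1 : ℝ) else 0) * N = E * #(F i) := by
      intro k _
      have h1 := avg_single Y (P k) (F i) (by rw [hPc]; exact hFs i hi)
      rw [hPc] at h1
      exact h1
    rw [sum_congr rfl this, sum_const, card_univ, Fintype.card_fin, nsmul_eq_mul]
    ring
  have hdet : ∀ e, ∃ j : ℕ, j ≤ s ∧ #(T e (s + 1)) ≤ j ∧
      (j : ℝ) * (t - j) - q * #(T e (s + 1)) ≤
      s * t - ((∑ i ∈ Finset.Icc 1 s, (#(T e i) : ℝ)) + q * #(T e (s + 1))) := by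
    intro e
    obtain ⟨j, hj, h1, h2⟩ := hall_nested s t (T e) (by
      intro i hi k hk
      simp only [T, mem_filter, mem_univ, true_and] at hk ⊢
      exact hnest i hi hk) (by
      rintro ⟨f, hf, hfT⟩
      apply hcross
      refine ⟨fun i => if h : i - 1 < s + 1 then imB e (P (f ⟨i - 1, h⟩)) else ∅, ?_, ?_⟩
      · intro i hi
        rw [mem_Icc] at hi
        have h : i - 1 < s + 1 := by omega
        have h3 := hfT ⟨i - 1, h⟩
        simp only [T, mem_filter, mem_univ, true_and] at h3
        rw [Nat.sub_add_cancel hi.1] at h3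
        simpa only [h, dif_pos] using h3
      · intro i hi i' hi' hne
        rw [mem_Icc] at hi hi'
        have h : i - 1 < s + 1 := by omega
        have h' : i' - 1 < s + 1 := by omega
        simp only [h, h', dif_pos]
        apply imB_disj
        apply hPd
        intro h4
        have h5 := congrArg Fin.val (hf h4)
        simp only at h5
        omega)
    refine ⟨j, hj, h1, ?_⟩
    have h3 : (∑ i ∈ Finset.Icc 1 s, (#(T e i) : ℝ)) ≤ ((s : ℝ) - j) * t + j * j := by
      have : ((∑ i ∈ Finset.Icc 1 s, #(T e i) : ℕ) : ℝ) ≤ (((s - j) * t + j * j : ℕ) : ℝ) := by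
        exact_mod_cast h2
      push_cast [Nat.cast_sub hj] at this
      exact this
    linarith
  have hkey : 0 ≤ ∑ e : Fin #Y ≃ ↥Y,
      ((s : ℝ) * t - ((∑ i ∈ Finset.Icc 1 s, (#(T e i) : ℝ)) + q * #(T e (s + 1)))) := by
    rcases le_total q x with hqx | hqx
    · apply sum_nonneg
      intro e _
      obtain ⟨j, hj, h1, h2⟩ := hdet e
      refine le_trans ?_ h2
      have hj' : (j : ℝ) ≤ s := by exact_mod_cast hj
      have h1' : (#(T e (s + 1)) : ℝ) ≤ j := by exact_mod_cast h1
      have h3 : q * #(T e (s + 1)) ≤ q * j := mul_le_mul_of_nonneg_left h1' (by linarith)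
      have h4 : (j : ℝ) * q ≤ j * (t - j) := mul_le_mul_of_nonneg_left (by linarith) (by positivity)
      linarith
    · have hlow : ∀ e ∈ (univ : Finset (Fin #Y ≃ ↥Y)),
          q * (κ * #(T e (s + 1)) - (1 + κ) ^ 2 / (κ ^ 2 * t) * (#(T e (s + 1)) - α * t) ^ 2) ≤
          (s : ℝ) * t - ((∑ i ∈ Finset.Icc 1 s, (#(T e i) : ℝ)) + q * #(T e (s + 1))) := by
        intro e _
        obtain ⟨j, hj, h1, h2⟩ := hdet e
        refine le_trans ?_ h2
        exact num_bound s t j _ x q α κ (by positivity) (by exact_mod_cast h1)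
          (by exact_mod_cast hj) hx1 hqx hq2 hκ0 hα0 hα1
          (by rw [hκ, mul_div_cancel₀ _ (two_ne_zero)]; exact hat) ht
      refine le_trans ?_ (sum_le_sum hlow)
      rw [← mul_sum]
      apply mul_nonneg (by linarith)
      rw [sum_sub_distrib, ← mul_sum, ← mul_sum]
      have m1 : ∑ e, (#(T e (s + 1)) : ℝ) = E * t * α := by
        have := hfirst (s + 1) hl1
        rw [hα, ← mul_assoc] at this
        exact mul_right_cancel₀ hN0.ne' this
      have m2 : ∑ e, (#(T e (s + 1)) : ℝ) ^ 2 ≤ E * (α ^ 2 * t ^ 2 + 3 * α * t) := by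
        simp_rw [hT]
        exact second_moment Y l t hl h2l htY ht0 P hPc hPd (F (s + 1)) (hFs _ hl1) α hα
      have m3 : ∑ e, ((#(T e (s + 1)) : ℝ) - α * t) ^ 2 ≤ E * (3 * α * t) := by
        have : ∑ e, ((#(T e (s + 1)) : ℝ) - α * t) ^ 2 =
            ∑ e, (#(T e (s + 1)) : ℝ) ^ 2 - 2 * (α * t) * ∑ e, (#(T e (s + 1)) : ℝ) +
              E * (α * t) ^ 2 := by
          have h5 : E * (α * t) ^ 2 = ∑ e : Fin #Y ≃ ↥Y, (α * t) ^ 2 := by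
            rw [sum_const, card_univ, nsmul_eq_mul]
          rw [h5, mul_sum, ← sum_sub_distrib, ← sum_add_distrib]
          refine sum_congr rfl fun e _ => ?_
          ring
        rw [this, m1]
        nlinarith
      have hC : (1 + κ) ^ 2 / (κ ^ 2 * t) * 3 ≤ κ := by
        rw [div_mul_eq_mul_div, div_le_iff₀ (by positivity)]
        rw [div_le_iff₀ (by positivity)] at hs'
        have : (s : ℝ) * κ ^ 3 ≤ t * κ ^ 3 :=
          mul_le_mul_of_nonneg_right (by linarith) (by positivity)
        nlinarith
      rw [m1]
      have h6 := mul_le_mul_of_nonneg_left m3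
        (show 0 ≤ (1 + κ) ^ 2 / (κ ^ 2 * t) by positivity)
      have h7 := mul_le_mul_of_nonneg_right hC (show 0 ≤ E * (α * t) by positivity)
      linarith
  have hsum : (∑ e : Fin #Y ≃ ↥Y,
      ((s : ℝ) * t - ((∑ i ∈ Finset.Icc 1 s, (#(T e i) : ℝ)) + q * #(T e (s + 1))))) * N =
      (E * t) * (s * N - ((∑ i ∈ Finset.Icc 1 s, (#(F i) : ℝ)) + q * #(F (s + 1)))) := by
    rw [sum_sub_distrib, sum_add_distrib, sum_const, card_univ, nsmul_eq_mul, ← mul_sum, sum_comm,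
      sub_mul, add_mul, sum_mul, mul_assoc q, hfirst _ hl1]
    have : ∑ i ∈ Finset.Icc 1 s, (∑ e, (#(T e i) : ℝ)) * N =
        E * t * ∑ i ∈ Finset.Icc 1 s, (#(F i) : ℝ) := by
      rw [mul_sum]
      refine sum_congr rfl fun i hi => hfirst i ?_
      rw [mem_Icc] at hi ⊢
      omega
    rw [this]
    ring
  have h8 : 0 ≤ (E * t) * (s * N - ((∑ i ∈ Finset.Icc 1 s, (#(F i) : ℝ)) + q * #(F (s + 1)))) := by
    rw [← hsum]
    exact mul_nonneg hkey hN0.le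
  have h9 := nonneg_of_mul_nonneg_right h8 (by positivity)
  linarith
end

section
/- Let F be an initial (shifted) family of k-element subsets of [m] with ν(F) ≤ s. Then the set {s+1, 2(s+1), …, k(s+1)} does not belong to F. -/
open Finset

/-- The shifting partial order: `A ≺ B` iff `A ≠ B`, the two sets have the same
size, and the `i`-th smallest element of `A` is at most the `i`-th smallest
element of `B` for every `i`. -/
def ShiftPrec (A B : Finset ℕ) : Prop :=
  A ≠ B ∧ List.Forall₂ (· ≤ ·) (A.sort (· ≤ ·)) (B.sort (· ≤ ·))

/-- A family of subsets of `[m] = {1,…,m}` is initial (shifted) if it is closed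
downwards with respect to the shifting partial order. -/
def IsInitial (m : ℕ) (F : Finset (Finset ℕ)) : Prop :=
  ∀ A B : Finset ℕ, A ⊆ Finset.Icc 1 m → ShiftPrec A B → B ∈ F → A ∈ F

/-- The matching number of a family of finite sets: the maximum size of a
subfamily consisting of pairwise disjoint sets. -/
noncomputable def matchingNumber (F : Finset (Finset ℕ)) : ℕ :=
  sSup {t : ℕ | ∃ M : Finset (Finset ℕ), M ⊆ F ∧
    (M : Set (Finset ℕ)).Pairwise (fun A B => Disjoint A B) ∧ M.card = t}


lemma sort_aux (k s j : ℕ) (hj : j < s + 1) :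
    ((Finset.Icc 1 k).image (fun i => i * (s + 1) - j)).sort (· ≤ ·)
      = (List.range k).map (fun i => (i + 1) * (s + 1) - j) := by
  have hlt : ((List.range k).map (fun i => (i + 1) * (s + 1) - j)).Pairwise (· < ·) := by
    rw [List.pairwise_map]
    refine List.pairwise_lt_range.imp ?_
    intro a b hab
    have h1 : (a + 1 + 1) * (s + 1) ≤ (b + 1) * (s + 1) := Nat.mul_le_mul_right _ (by omega)
    have h2 : (a + 1 + 1) * (s + 1) = (a + 1) * (s + 1) + (s + 1) := by ring
    have h3 : (a + 1) * (s + 1) = a * (s + 1) + (s + 1) := by ring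
    omega
  have hset : (Finset.Icc 1 k).image (fun i => i * (s + 1) - j)
      = ((List.range k).map (fun i => (i + 1) * (s + 1) - j)).toFinset := by
    ext x
    simp only [Finset.mem_image, Finset.mem_Icc, List.mem_toFinset, List.mem_map, List.mem_range]
    constructor
    · rintro ⟨i, hi, rfl⟩
      exact ⟨i - 1, by omega, by rw [Nat.sub_add_cancel hi.1]⟩
    · rintro ⟨i, hi, rfl⟩
      exact ⟨i + 1, by omega, rfl⟩
  rw [hset]
  exact (List.toFinset_sort (· ≤ ·) (hlt.imp (fun h => Nat.ne_of_lt h))).2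
    (hlt.imp (fun h => Nat.le_of_lt h))

theorem shifted_avoids_arithmetic_set (m k s : ℕ) (hk : 1 ≤ k)
    (F : Finset (Finset ℕ)) (hF : F ⊆ (Finset.Icc 1 m).powersetCard k)
    (hinit : IsInitial m F) (hnu : matchingNumber F ≤ s) :
    (Finset.Icc 1 k).image (fun i => i * (s + 1)) ∉ F := by
  intro hB
  set A : ℕ → Finset ℕ := fun j => (Finset.Icc 1 k).image (fun i => i * (s + 1) - j) with hA
  have hA0 : A 0 ∈ F := by simpa [hA] using hB
  have hsub : A 0 ⊆ Finset.Icc 1 m := (Finset.mem_powersetCard.1 (hF hA0)).1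
  have hmem : ∀ j < s + 1, A j ∈ F := by
    intro j hj
    by_cases hne : A j = A 0
    · rw [hne]; exact hA0
    refine hinit (A j) (A 0) ?_ ⟨hne, ?_⟩ hA0
    · intro x hx
      obtain ⟨i, hi, rfl⟩ := Finset.mem_image.1 hx
      have h0 : i * (s + 1) - 0 ∈ A 0 := Finset.mem_image_of_mem _ hi
      have h1 := Finset.mem_Icc.1 (hsub h0)
      have h2 : 1 * (s + 1) ≤ i * (s + 1) := Nat.mul_le_mul_right _ (Finset.mem_Icc.1 hi).1
      simp only [Finset.mem_Icc]
      omega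
    · rw [hA, sort_aux k s j hj, sort_aux k s 0 (by omega), List.forall₂_map_left_iff,
        List.forall₂_map_right_iff, List.forall₂_same]
      intro i _
      omega
  have hdisj : ∀ a < s + 1, ∀ b < s + 1, a ≠ b → Disjoint (A a) (A b) := by
    intro a ha b hb hab
    rw [Finset.disjoint_left]
    intro x hx hy
    obtain ⟨i, hi, rfl⟩ := Finset.mem_image.1 hx
    obtain ⟨l, hl, h⟩ := Finset.mem_image.1 hy
    have hi1 := (Finset.mem_Icc.1 hi).1
    have hl1 := (Finset.mem_Icc.1 hl).1
    have e1 : 1 * (s + 1) ≤ i * (s + 1) := Nat.mul_le_mul_right _ hi1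
    have e2 : 1 * (s + 1) ≤ l * (s + 1) := Nat.mul_le_mul_right _ hl1
    rcases lt_trichotomy i l with h' | h' | h'
    · have h1 : (i + 1) * (s + 1) ≤ l * (s + 1) := Nat.mul_le_mul_right _ h'
      have h2 : (i + 1) * (s + 1) = i * (s + 1) + (s + 1) := by ring
      omega
    · subst h'
      omega
    · have h1 : (l + 1) * (s + 1) ≤ i * (s + 1) := Nat.mul_le_mul_right _ h'
      have h2 : (l + 1) * (s + 1) = l * (s + 1) + (s + 1) := by ring
      omega
  have hnon : ∀ j, (A j).Nonempty := fun j =>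
    (Finset.nonempty_Icc.2 hk).image _
  have hinj : Set.InjOn A (Finset.range (s + 1) : Finset ℕ) := by
    intro a ha b hb hab
    by_contra hne
    have hd := hdisj a (by simpa using ha) b (by simpa using hb) hne
    rw [hab, disjoint_self] at hd
    exact (hnon b).ne_empty hd
  have hle : s + 1 ≤ matchingNumber F := by
    refine le_csSup ⟨F.card, ?_⟩ ⟨(Finset.range (s + 1)).image A, ?_, ?_, ?_⟩
    · rintro t ⟨M, hM, _, rfl⟩
      exact Finset.card_le_card hM
    · intro X hX
      obtain ⟨j, hj, rfl⟩ := Finset.mem_image.1 hX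
      exact hmem j (Finset.mem_range.1 hj)
    · intro X hX Y hY hXY
      obtain ⟨a, ha, rfl⟩ := Finset.mem_image.1 (Finset.mem_coe.1 hX)
      obtain ⟨b, hb, rfl⟩ := Finset.mem_image.1 (Finset.mem_coe.1 hY)
      exact hdisj a (Finset.mem_range.1 ha) b (Finset.mem_range.1 hb) (fun h => hXY (by rw [h]))
    · rw [Finset.card_image_of_injOn hinj, Finset.card_range]
  omega
end

section
/- Let F be an initial (shifted) family of k-element subsets of [n] with ν(F) ≤ s. Then for every F ∈ F there exists an integer i with 1 ≤ i ≤ k such that |F ∩ [i(s+1) − 1]| ≥ i. -/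
open Finset

theorem sort_forall_le {k : ℕ} (A B : Finset ℕ) (hA : A.card = k) (hB : B.card = k)
    (h : ∀ i : Fin k, A.orderEmbOfFin hA i ≤ B.orderEmbOfFin hB i) :
    List.Forall₂ (· ≤ ·) (A.sort (· ≤ ·)) (B.sort (· ≤ ·)) := by
  rw [List.forall₂_iff_get]
  refine ⟨by simp [hA, hB], ?_⟩
  intro i h1 h2
  have := h ⟨i, by simpa [hA] using h1⟩
  simpa [Finset.orderEmbOfFin_apply] using this

theorem shifted_intersection_lower_bound (n k s : ℕ) (hk : 1 ≤ k)
    (F : Finset (Finset ℕ)) (hF : F ⊆ (Finset.Icc 1 n).powersetCard k)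
    (hinit : IsInitial n F) (hnu : matchingNumber F ≤ s) :
    ∀ A ∈ F, ∃ i : ℕ, 1 ≤ i ∧ i ≤ k ∧
      i ≤ (A ∩ Finset.Icc 1 (i * (s + 1) - 1)).card := by
  intro A hAF
  by_contra hcon
  push Not at hcon
  have hA := Finset.mem_powersetCard.1 (hF hAF)
  obtain ⟨hAn, hAk⟩ := hA
  have hlow : ∀ i : Fin k, ((i : ℕ) + 1) * (s + 1) ≤ A.orderEmbOfFin hAk i := by
    intro i
    by_contra hlt
    push Not at hlt
    have h1 := hcon (i + 1) (by omega) (by omega)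
    have hsub : (Finset.Iic i).map (A.orderEmbOfFin hAk).toEmbedding ⊆
        A ∩ Finset.Icc 1 (((i : ℕ) + 1) * (s + 1) - 1) := by
      intro x hx
      obtain ⟨j, hj, rfl⟩ := Finset.mem_map.1 hx
      have hj' : j ≤ i := Finset.mem_Iic.1 hj
      have hm : A.orderEmbOfFin hAk j ∈ A := Finset.orderEmbOfFin_mem A hAk j
      have hle : A.orderEmbOfFin hAk j ≤ A.orderEmbOfFin hAk i :=
        (A.orderEmbOfFin hAk).monotone hj'
      have h1 := Finset.mem_Icc.1 (hAn hm)
      refine Finset.mem_inter.2 ⟨hm, Finset.mem_Icc.2 ⟨h1.1, ?_⟩⟩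
      change A.orderEmbOfFin hAk j ≤ _
      omega
    have h2 := Finset.card_le_card hsub
    rw [Finset.card_map, Fin.card_Iic] at h2
    omega
  have hf : ∀ j : ℕ, StrictMono (fun i : Fin k => j + 1 + (i : ℕ) * (s + 1)) := by
    intro j a b hab
    have : (a : ℕ) < b := hab
    have := Nat.mul_lt_mul_of_pos_right this (Nat.succ_pos s)
    simp only [Nat.succ_eq_add_one] at this
    show j + 1 + (a : ℕ) * (s + 1) < j + 1 + (b : ℕ) * (s + 1)
    omega
  let B : ℕ → Finset ℕ := fun j =>
    Finset.univ.image (fun i : Fin k => j + 1 + (i : ℕ) * (s + 1))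
  have hBk : ∀ j, (B j).card = k := by
    intro j
    simp only [B]
    rw [Finset.card_image_of_injective _ (hf j).injective]
    simp
  have hBe : ∀ j (i : Fin k), (B j).orderEmbOfFin (hBk j) i = j + 1 + (i : ℕ) * (s + 1) := by
    intro j i
    have := Finset.orderEmbOfFin_unique (hBk j) (f := fun i : Fin k => j + 1 + (i : ℕ) * (s + 1))
      (fun x => Finset.mem_image_of_mem _ (Finset.mem_univ x)) (hf j)
    exact (congrFun this i).symm
  have hle : ∀ j, j < s + 1 → ∀ i : Fin k,
      j + 1 + (i : ℕ) * (s + 1) ≤ A.orderEmbOfFin hAk i := by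
    intro j hj i
    have := hlow i
    rw [Nat.add_mul] at this
    omega
  have hBF : ∀ j, j < s + 1 → B j ∈ F := by
    intro j hj
    by_cases hne : B j = A
    · rw [hne]; exact hAF
    refine hinit (B j) A ?_ ⟨hne, sort_forall_le _ _ (hBk j) hAk ?_⟩ hAF
    · intro x hx
      obtain ⟨i, -, rfl⟩ := Finset.mem_image.1 hx
      have h1 := hle j hj i
      have h2 := (Finset.mem_Icc.1 (hAn (Finset.orderEmbOfFin_mem A hAk i))).2
      refine Finset.mem_Icc.2 ⟨by omega, by omega⟩
    · intro i
      rw [hBe]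
      exact hle j hj i
  have hdisj : ∀ j, j < s + 1 → ∀ l, l < s + 1 → j ≠ l → Disjoint (B j) (B l) := by
    intro j hj l hl hjl
    rw [Finset.disjoint_left]
    intro x hx hy
    obtain ⟨a, -, rfl⟩ := Finset.mem_image.1 hx
    obtain ⟨b, -, hb⟩ := Finset.mem_image.1 hy
    apply hjl
    have h : j + (a : ℕ) * (s + 1) = l + (b : ℕ) * (s + 1) := by omega
    have h' := congrArg (· % (s + 1)) h
    simpa [Nat.add_mul_mod_self_right, Nat.mod_eq_of_lt hj, Nat.mod_eq_of_lt hl] using h'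
  have hinj : Set.InjOn B (Finset.range (s + 1) : Set ℕ) := by
    intro j hj l hl he
    by_contra hjl
    have hd := hdisj j (by simpa using hj) l (by simpa using hl) hjl
    rw [← he, disjoint_self] at hd
    have := hBk j
    rw [hd] at this
    simp at this
    omega
  have hmem : s + 1 ≤ matchingNumber F := by
    apply le_csSup
    · refine ⟨F.card, ?_⟩
      rintro t ⟨M, hM, -, rfl⟩
      exact Finset.card_le_card hM
    · refine ⟨(Finset.range (s + 1)).image B, ?_, ?_, ?_⟩
      · intro x hx
        obtain ⟨j, hj, rfl⟩ := Finset.mem_image.1 hx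
        exact hBF j (Finset.mem_range.1 hj)
      · intro x hx y hy hxy
        obtain ⟨j, hj, rfl⟩ := Finset.mem_image.1 (Finset.mem_coe.1 hx)
        obtain ⟨l, hl, rfl⟩ := Finset.mem_image.1 (Finset.mem_coe.1 hy)
        exact hdisj j (Finset.mem_range.1 hj) l (Finset.mem_range.1 hl)
          (fun h => hxy (by rw [h]))
      · rw [Finset.card_image_of_injOn hinj, Finset.card_range]
  omega
end

section
/- Let k ≥ 2 and let F be an initial (shifted) family of k-element subsets of [m] such that ν(∂F) ≤ s, where ∂F is the immediate shadow of F. Then for every F ∈ F there exists an integer i with 1 ≤ i < k such that |F ∩ [i(s+1) − 1]| ≥ i + 1. -/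
open Finset

lemma aux_forall2 : ∀ (l₁ l₂ : List ℕ), l₁.Pairwise (· ≤ ·) → l₂.Pairwise (· ≤ ·) →
    l₁.length = l₂.length →
    (∀ n, l₂.countP (fun x => decide (x ≤ n)) ≤ l₁.countP (fun x => decide (x ≤ n))) →
    List.Forall₂ (· ≤ ·) l₁ l₂ := by
  intro l₁
  induction l₁ with
  | nil =>
    intro l₂ _ _ hl _
    cases l₂ with
    | nil => exact List.Forall₂.nil
    | cons b l => simp at hl
  | cons a l ih =>
    intro l₂ h1 h2 hl hc
    cases l₂ with
    | nil => simp at hl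
    | cons b l' =>
      rw [List.pairwise_cons] at h1 h2
      have hab : a ≤ b := by
        have h := hc b
        have h3 : 0 < (a :: l).countP (fun x => decide (x ≤ b)) := by
          refine lt_of_lt_of_le ?_ h
          rw [List.countP_pos_iff]
          exact ⟨b, by simp, by simp⟩
        rw [List.countP_pos_iff] at h3
        obtain ⟨x, hx, hxb⟩ := h3
        have hxb' : x ≤ b := by simpa using hxb
        rcases List.mem_cons.1 hx with rfl | hx
        · exact hxb'
        · exact (h1.1 x hx).trans hxb'
      refine List.Forall₂.cons hab (ih l' h1.2 h2.2 (by simpa using hl) ?_)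
      intro n
      by_cases hn : b ≤ n
      · have h := hc n
        rw [List.countP_cons_of_pos (by simpa using hn),
          List.countP_cons_of_pos (by simpa using hab.trans hn)] at h
        omega
      · have : l'.countP (fun x => decide (x ≤ n)) = 0 := by
          rw [List.countP_eq_zero]
          intro x hx
          have := h2.1 x hx
          simp only [decide_eq_true_eq]
          omega
        omega

lemma aux_count (A : Finset ℕ) (n : ℕ) :
    (A.sort (· ≤ ·)).countP (fun x => decide (x ≤ n)) = (A.filter (· ≤ n)).card := by
  have h : ((A.sort (· ≤ ·) : List ℕ) : Multiset ℕ) = A.val := Finset.sort_eq A _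
  rw [Finset.card_def, Finset.filter_val, ← Multiset.countP_eq_card_filter, ← h,
    Multiset.coe_countP]

lemma aux_shift (A B : Finset ℕ) (hc : A.card = B.card)
    (h : ∀ n, (B.filter (· ≤ n)).card ≤ (A.filter (· ≤ n)).card) :
    List.Forall₂ (· ≤ ·) (A.sort (· ≤ ·)) (B.sort (· ≤ ·)) := by
  apply aux_forall2
  · exact Finset.pairwise_sort A _
  · exact Finset.pairwise_sort B _
  · simpa using hc
  · intro n
    rw [aux_count, aux_count]
    exact h n

theorem shifted_shadow_intersection_lower_bound (m k s : ℕ) (hk : 2 ≤ k)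
    (F : Finset (Finset ℕ)) (hF : F ⊆ (Finset.Icc 1 m).powersetCard k)
    (hinit : IsInitial m F) (hnu : matchingNumber (Finset.shadow F) ≤ s) :
    ∀ A ∈ F, ∃ i : ℕ, 1 ≤ i ∧ i < k ∧
      i + 1 ≤ (A ∩ Finset.Icc 1 (i * (s + 1) - 1)).card := by
  intro A hA
  by_contra hcon
  push Not at hcon
  obtain ⟨hAm, hAk⟩ := Finset.mem_powersetCard.1 (hF hA)
  -- key count
  have key : ∀ n i, 1 ≤ i → i + 1 ≤ (A.filter (· ≤ n)).card → i * (s + 1) ≤ n := by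
    intro n i hi hc
    have hik : i < k := by
      have := Finset.card_filter_le A (· ≤ n)
      omega
    by_contra hlt
    have h1 := hcon i hi hik
    have h2 : A.filter (· ≤ n) ⊆ A ∩ Finset.Icc 1 (i * (s + 1) - 1) := by
      intro x hx
      rw [Finset.mem_filter] at hx
      have := Finset.mem_Icc.1 (hAm hx.1)
      rw [Finset.mem_inter, Finset.mem_Icc]
      exact ⟨hx.1, this.1, by omega⟩
    have := Finset.card_le_card h2
    omega
  have hm : (k - 1) * (s + 1) ≤ m := by
    apply key m (k - 1) (by omega)
    rw [Finset.filter_true_of_mem (fun x hx => (Finset.mem_Icc.1 (hAm hx)).2)]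
    omega
  have hkm : k ≤ m := by
    have := Finset.card_le_card hAm
    simp at this
    omega
  let H : ℕ → Finset ℕ := fun j => (Finset.range (k - 1)).image (fun i => i * (s + 1) + j)
  have hinj : ∀ j, Function.Injective (fun i => i * (s + 1) + j) := by
    intro j a b hab
    have h : a * (s + 1) = b * (s + 1) := by simpa using hab
    exact Nat.eq_of_mul_eq_mul_right (Nat.succ_pos s) h
  have hHcard : ∀ j, (H j).card = k - 1 := by
    intro j
    rw [Finset.card_image_of_injective _ (hinj j), Finset.card_range]
  have hHm : ∀ j ∈ Finset.Icc 1 (s + 1), H j ⊆ Finset.Icc 1 m := by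
    intro j hj x hx
    rw [Finset.mem_Icc] at hj
    obtain ⟨i, hi, rfl⟩ := Finset.mem_image.1 hx
    rw [Finset.mem_range] at hi
    have : (i + 1) * (s + 1) ≤ (k - 1) * (s + 1) := Nat.mul_le_mul_right _ hi
    rw [Finset.mem_Icc]
    constructor
    · omega
    · rw [add_mul] at this
      omega
  have hHcount : ∀ j ∈ Finset.Icc 1 (s + 1), ∀ n,
      (A.filter (· ≤ n)).card ≤ ((H j).filter (· ≤ n)).card + 1 := by
    intro j hj n
    rw [Finset.mem_Icc] at hj
    by_cases hc : (A.filter (· ≤ n)).card ≤ 1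
    · omega
    obtain ⟨i, hi⟩ : ∃ i, (A.filter (· ≤ n)).card = i + 1 := ⟨_, (Nat.sub_add_cancel (by omega)).symm⟩
    have hle := key n i (by omega) (by omega)
    have hik : i + 1 ≤ k := by
      have := Finset.card_filter_le A (· ≤ n)
      omega
    have hsub : (Finset.range i).image (fun i => i * (s + 1) + j) ⊆ (H j).filter (· ≤ n) := by
      intro x hx
      obtain ⟨t, ht, rfl⟩ := Finset.mem_image.1 hx
      rw [Finset.mem_range] at ht
      rw [Finset.mem_filter]
      refine ⟨Finset.mem_image.2 ⟨t, by rw [Finset.mem_range]; omega, rfl⟩, ?_⟩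
      have : (t + 1) * (s + 1) ≤ i * (s + 1) := Nat.mul_le_mul_right _ ht
      rw [add_mul] at this
      omega
    have := Finset.card_le_card hsub
    rw [Finset.card_image_of_injective _ (hinj j), Finset.card_range] at this
    omega
  have hHsh : ∀ j ∈ Finset.Icc 1 (s + 1), H j ∈ Finset.shadow F := by
    intro j hj
    have hex : ∃ x, 1 ≤ x ∧ x ≤ m ∧ x ∉ H j := by
      by_contra hno
      push Not at hno
      have : Finset.Icc 1 m ⊆ H j := fun x hx =>
        hno x (Finset.mem_Icc.1 hx).1 (Finset.mem_Icc.1 hx).2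
      have := Finset.card_le_card this
      rw [hHcard] at this
      simp at this
      omega
    classical
    obtain ⟨hx1, hxm, hxH⟩ := Nat.find_spec hex
    have hmin : ∀ y, y < Nat.find hex → ¬ (1 ≤ y ∧ y ≤ m ∧ y ∉ H j) :=
      fun y hy => Nat.find_min hex hy
    generalize Nat.find hex = x at hx1 hxm hxH hmin
    rw [Finset.mem_shadow_iff_insert_mem]
    refine ⟨x, hxH, ?_⟩
    by_cases heq : insert x (H j) = A
    · rw [heq]; exact hA
    refine hinit _ A ?_ ⟨heq, aux_shift _ _ ?_ ?_⟩ hA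
    · exact Finset.insert_subset (Finset.mem_Icc.2 ⟨hx1, hxm⟩) (hHm j hj)
    · rw [Finset.card_insert_of_notMem hxH, hHcard]; omega
    · intro n
      by_cases hn : x ≤ n
      · rw [Finset.filter_insert, if_pos hn, Finset.card_insert_of_notMem (by simp [hxH])]
        exact hHcount j hj n
      · apply Finset.card_le_card
        intro y hy
        rw [Finset.mem_filter] at hy ⊢
        have h1 := Finset.mem_Icc.1 (hAm hy.1)
        refine ⟨Finset.mem_insert_of_mem ?_, hy.2⟩
        by_contra hyH
        exact hmin y (by omega) ⟨h1.1, h1.2, hyH⟩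
  have hdisj : ∀ j ∈ Finset.Icc 1 (s + 1), ∀ j' ∈ Finset.Icc 1 (s + 1), ∀ x,
      x ∈ H j → x ∈ H j' → j = j' := by
    intro j hj j' hj' x hx hx'
    rw [Finset.mem_Icc] at hj hj'
    obtain ⟨a, _, rfl⟩ := Finset.mem_image.1 hx
    obtain ⟨b, _, hb⟩ := Finset.mem_image.1 hx'
    rcases lt_trichotomy a b with h | h | h
    · have : (a + 1) * (s + 1) ≤ b * (s + 1) := Nat.mul_le_mul_right _ h
      rw [add_mul] at this
      omega
    · subst h; omega
    · have : (b + 1) * (s + 1) ≤ a * (s + 1) := Nat.mul_le_mul_right _ h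
      rw [add_mul] at this
      omega
  have hM : s + 1 ≤ matchingNumber (Finset.shadow F) := by
    apply le_csSup
    · refine ⟨(Finset.shadow F).card, ?_⟩
      rintro t ⟨M, hM, _, rfl⟩
      exact Finset.card_le_card hM
    · refine ⟨(Finset.Icc 1 (s + 1)).image H, ?_, ?_, ?_⟩
      · intro B hB
        obtain ⟨j, hj, rfl⟩ := Finset.mem_image.1 hB
        exact hHsh j hj
      · intro B hB C hC hne
        obtain ⟨j, hj, rfl⟩ := Finset.mem_image.1 (Finset.mem_coe.1 hB)
        obtain ⟨j', hj', rfl⟩ := Finset.mem_image.1 (Finset.mem_coe.1 hC)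
        rw [Finset.disjoint_left]
        intro x hx hx'
        exact hne (by rw [hdisj j hj j' hj' x hx hx'])
      · rw [Finset.card_image_of_injOn]
        · simp
        · intro j hj j' hj' h
          have hne : (H j).Nonempty := by
            rw [← Finset.card_pos, hHcard]; omega
          obtain ⟨x, hx⟩ := hne
          exact hdisj j hj j' hj' x hx (by rw [← show H j = H j' from h]; exact hx)
  omega
end

section
/- Let k ≥ 2 and let F be an initial (shifted) family of k-element subsets of [n] with ν(F) ≤ s, where n ≥ s+1. Then ν(∂(F(∅))) ≤ s, where F(∅) := {F ∈ F : F ∩ [s+1] = ∅} and ∂ denotes the immediate shadow. -/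
open Finset

lemma aux_forall (x : ℕ) (l : List ℕ) : ∀ a : ℕ, a ≤ x → l.Pairwise (· ≤ ·) →
    (∀ b ∈ l, a ≤ b) → List.Forall₂ (· ≤ ·) (a :: l) (l.orderedInsert (· ≤ ·) x) := by
  induction l with
  | nil => intro a ha _ _; simpa using ha
  | cons b l ih =>
    intro a ha hs hb
    rw [List.pairwise_cons] at hs
    by_cases h : x ≤ b
    · rw [List.orderedInsert_cons_of_le _ _ h]
      exact List.Forall₂.cons ha (List.forall₂_refl _)
    · rw [List.orderedInsert_cons, if_neg h]
      exact List.Forall₂.cons (hb b (by simp)) (ih b (by omega) hs.2 hs.1)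

lemma aux_sort (x : ℕ) (H : Finset ℕ) (hx : x ∉ H) :
    (insert x H).sort (· ≤ ·) = (H.sort (· ≤ ·)).orderedInsert (· ≤ ·) x := by
  apply List.Perm.eq_of_pairwise' (r := (· ≤ ·))
  · exact Finset.pairwise_sort _ _
  · exact (Finset.pairwise_sort _ _).orderedInsert _ _
  · rw [← Multiset.coe_eq_coe]
    rw [Multiset.coe_eq_coe.2 (List.perm_orderedInsert _ _ _), ← Multiset.cons_coe]
    simp [Finset.insert_val_of_notMem hx]

lemma aux_prec (a x : ℕ) (H : Finset ℕ) (hx : x ∉ H) (ha : ∀ b ∈ H, a < b) (hax : a < x) :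
    ShiftPrec (insert a H) (insert x H) := by
  refine ⟨?_, ?_⟩
  · intro h
    have : a ∈ insert x H := h ▸ Finset.mem_insert_self a H
    rcases Finset.mem_insert.1 this with h | h
    · omega
    · exact lt_irrefl _ (ha a h)
  · rw [aux_sort x H hx, Finset.sort_insert (r := (· ≤ ·)) (h₁ := fun b hb => (ha b hb).le)
      (h₂ := fun h => lt_irrefl _ (ha a h))]
    exact aux_forall x _ a hax.le (Finset.pairwise_sort _ _)
      (fun b hb => (ha b (by simpa using hb)).le)

theorem shadow_of_empty_part_matching_bound (n k s : ℕ) (hk : 2 ≤ k) (hn : s + 1 ≤ n)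
    (F : Finset (Finset ℕ)) (hF : F ⊆ (Finset.Icc 1 n).powersetCard k)
    (hinit : IsInitial n F) (hnu : matchingNumber F ≤ s) :
    matchingNumber
      (Finset.shadow (F.filter fun A => A ∩ Finset.Icc 1 (s + 1) = ∅)) ≤ s := by
  unfold matchingNumber
  apply csSup_le'
  rintro t ⟨M, hM, hMd, rfl⟩
  by_contra hlt
  obtain ⟨N, hNM, hNc⟩ := Finset.exists_subset_card_eq (show s + 1 ≤ M.card by omega)
  have hcard : N.card = (Finset.Icc 1 (s+1)).card := by simp [hNc]
  obtain e := Finset.equivOfCardEq hcard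
  have key : ∀ H ∈ N, (∀ b ∈ H, s + 1 < b) ∧
      ∀ a ∈ Finset.Icc 1 (s+1), insert a H ∈ F := by
    intro H hH
    obtain ⟨x, hx, hxF⟩ := Finset.mem_shadow_iff_insert_mem.1 (hM (hNM hH))
    rw [Finset.mem_filter] at hxF
    obtain ⟨hxF, hemp⟩ := hxF
    have hsub := (Finset.mem_powersetCard.1 (hF hxF)).1
    have hbig : ∀ b ∈ insert x H, s + 1 < b := by
      intro b hb
      have h1 := Finset.mem_Icc.1 (hsub hb)
      by_contra h2
      have : b ∈ insert x H ∩ Finset.Icc 1 (s+1) :=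
        Finset.mem_inter.2 ⟨hb, Finset.mem_Icc.2 ⟨h1.1, by omega⟩⟩
      rw [hemp] at this
      simp at this
    refine ⟨fun b hb => hbig b (Finset.mem_insert_of_mem hb), fun a ha => ?_⟩
    have ha' := Finset.mem_Icc.1 ha
    refine hinit _ _ ?_ (aux_prec a x H hx ?_ ?_) hxF
    · intro b hb
      rcases Finset.mem_insert.1 hb with rfl | hb
      · exact Finset.mem_Icc.2 ⟨ha'.1, by omega⟩
      · exact hsub (Finset.mem_insert_of_mem hb)
    · intro b hb
      have := hbig b (Finset.mem_insert_of_mem hb)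
      omega
    · have := hbig x (Finset.mem_insert_self _ _)
      omega
  let g : {x // x ∈ N} → Finset ℕ := fun H => insert (e H : ℕ) (H : Finset ℕ)
  have hdisj : ∀ H K : {x // x ∈ N}, H ≠ K → Disjoint (g H) (g K) := by
    intro H K hne
    have h1 : Disjoint (H : Finset ℕ) K :=
      hMd (hNM H.2) (hNM K.2) (fun h => hne (Subtype.ext h))
    have h2 : (e H : ℕ) ≠ e K := fun h => hne (e.injective (Subtype.ext h))
    have h3 := Finset.mem_Icc.1 (e H).2
    have h4 := Finset.mem_Icc.1 (e K).2
    have h5 : (e H : ℕ) ∉ (K : Finset ℕ) := fun h => by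
      have := (key K K.2).1 _ h
      omega
    have h6 : (e K : ℕ) ∉ (H : Finset ℕ) := fun h => by
      have := (key H H.2).1 _ h
      omega
    simp only [g, Finset.disjoint_insert_left, Finset.disjoint_insert_right, Finset.mem_insert]
    tauto
  have hginj : Function.Injective g := by
    intro H K h
    by_contra hne
    have := hdisj H K hne
    rw [h, disjoint_self] at this
    exact Finset.insert_ne_empty _ _ this
  have hle : s + 1 ≤ matchingNumber F := by
    apply le_csSup
    · refine ⟨F.card, ?_⟩
      rintro t ⟨M', hM', _, rfl⟩
      exact Finset.card_le_card hM'
    · refine ⟨N.attach.image g, ?_, ?_, ?_⟩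
      · intro A hA
        obtain ⟨H, _, rfl⟩ := Finset.mem_image.1 hA
        exact (key H H.2).2 _ (e H).2
      · intro A hA B hB hAB
        obtain ⟨H, _, rfl⟩ := Finset.mem_image.1 hA
        obtain ⟨K, _, rfl⟩ := Finset.mem_image.1 hB
        exact hdisj H K (fun h => hAB (by rw [h]))
      · rw [Finset.card_image_of_injective _ hginj, Finset.card_attach, hNc]
  omega
end

section
/- Fix an integer k ≥ 2. The function x ↦ c*_x, where c*_x := limsup_{n→∞} m*(n,k,⌊xn⌋)/C(n,k), is nondecreasing and continuous on the interval [0, 1/k), where C(a,b) denotes the binomial coefficient. -/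
open Finset

/-- The fractional matching number of a family `F` of subsets of `{0,…,n-1}`:
the supremum of sizes of fractional matchings, i.e. weight functions
`w : F → [0,1]` such that every vertex carries total weight at most 1. -/
noncomputable def fracMatchingNumber (n : ℕ) (F : Finset (Finset ℕ)) : ℝ :=
  sSup {v : ℝ | ∃ w : Finset ℕ → ℝ,
    (∀ A, 0 ≤ w A ∧ w A ≤ 1) ∧ (∀ A, A ∉ F → w A = 0) ∧
    (∀ i ∈ Finset.range n, ∑ A ∈ F.filter (fun A => i ∈ A), w A ≤ 1) ∧
    v = ∑ A ∈ F, w A}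

/-- `mStarEMC n k s` is `m*(n,k,s)`: the maximum size of a family of
`k`-subsets of an `n`-set whose fractional matching number is less than `s+1`. -/
noncomputable def mStarEMC (n k s : ℕ) : ℕ :=
  sSup {t : ℕ | ∃ F : Finset (Finset ℕ), F ⊆ (Finset.range n).powersetCard k ∧
    fracMatchingNumber n F < (s : ℝ) + 1 ∧ t = F.card}

/-- `cStar k x = limsup_{n → ∞} m*(n,k,⌊xn⌋) / C(n,k)`. -/
noncomputable def cStar (k : ℕ) (x : ℝ) : ℝ :=
  Filter.limsup (fun n : ℕ => (mStarEMC n k ⌊x * n⌋₊ : ℝ) / (n.choose k : ℝ)) Filter.atTop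

lemma frac_set_bdd (n : ℕ) (F : Finset (Finset ℕ)) :
    BddAbove {v : ℝ | ∃ w : Finset ℕ → ℝ,
    (∀ A, 0 ≤ w A ∧ w A ≤ 1) ∧ (∀ A, A ∉ F → w A = 0) ∧
    (∀ i ∈ Finset.range n, ∑ A ∈ F.filter (fun A => i ∈ A), w A ≤ 1) ∧
    v = ∑ A ∈ F, w A} := by
  refine ⟨F.card, ?_⟩
  rintro v ⟨w, h1, -, -, rfl⟩
  calc ∑ A ∈ F, w A ≤ ∑ A ∈ F, (1 : ℝ) := Finset.sum_le_sum fun A _ => (h1 A).2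
    _ = F.card := by simp

lemma frac_mono {n n' : ℕ} (h : n ≤ n') (F : Finset (Finset ℕ)) :
    fracMatchingNumber n' F ≤ fracMatchingNumber n F := by
  unfold fracMatchingNumber
  apply csSup_le_csSup (frac_set_bdd n F)
  · exact ⟨0, fun _ => 0, by simp, by simp, by simp, by simp⟩
  · rintro v ⟨w, h1, h2, h3, rfl⟩
    refine ⟨w, h1, h2, fun i hi => h3 i ?_, rfl⟩
    simp only [Finset.mem_range] at hi ⊢
    omega

lemma m_set_bdd (n k s : ℕ) : BddAbove {t : ℕ | ∃ F : Finset (Finset ℕ),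
    F ⊆ (Finset.range n).powersetCard k ∧
    fracMatchingNumber n F < (s : ℝ) + 1 ∧ t = F.card} := by
  refine ⟨n.choose k, ?_⟩
  rintro t ⟨F, hF, -, rfl⟩
  simpa using Finset.card_le_card hF

lemma m_set_nonempty (n k s : ℕ) : {t : ℕ | ∃ F : Finset (Finset ℕ),
    F ⊆ (Finset.range n).powersetCard k ∧
    fracMatchingNumber n F < (s : ℝ) + 1 ∧ t = F.card}.Nonempty := by
  refine ⟨0, ∅, by simp, ?_, by simp⟩
  have : fracMatchingNumber n ∅ ≤ 0 := by
    unfold fracMatchingNumber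
    apply csSup_le
    · exact ⟨0, fun _ => 0, by simp, by simp, by simp, by simp⟩
    · rintro v ⟨w, h1, h2, h3, rfl⟩
      simp
  have : (0 : ℝ) ≤ s := by positivity
  linarith

lemma m_le_choose (n k s : ℕ) : mStarEMC n k s ≤ n.choose k := by
  apply csSup_le (m_set_nonempty n k s)
  rintro t ⟨F, hF, -, rfl⟩
  simpa using Finset.card_le_card hF

lemma m_mono {n n' s s' : ℕ} (k : ℕ) (h : n ≤ n') (hs : s ≤ s') :
    mStarEMC n k s ≤ mStarEMC n' k s' := by
  apply csSup_le_csSup (m_set_bdd n' k s') (m_set_nonempty n k s)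
  rintro t ⟨F, hF, h2, rfl⟩
  refine ⟨F, hF.trans (Finset.powersetCard_mono (Finset.range_mono h)), ?_, rfl⟩
  have := frac_mono h F
  have : (s : ℝ) ≤ s' := by exact_mod_cast hs
  linarith

lemma card_star (n k v : ℕ) (hk : 1 ≤ k) (hv : v < n) :
    (((Finset.range n).powersetCard k).filter (fun A => v ∈ A)).card ≤ (n-1).choose (k-1) := by
  have : (((Finset.range n).erase v).powersetCard (k-1)).card = (n-1).choose (k-1) := by
    rw [Finset.card_powersetCard, Finset.card_erase_of_mem (by simpa using hv), Finset.card_range]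
  rw [← this]
  apply Finset.card_le_card_of_injOn (fun A => A.erase v)
  · intro A hA
    simp only [Finset.coe_filter, Finset.mem_powersetCard, Set.mem_ofPred_eq] at hA
    simp only [Finset.mem_coe, Finset.mem_powersetCard]
    refine ⟨Finset.erase_subset_erase _ hA.1.1, ?_⟩
    rw [Finset.card_erase_of_mem hA.2, hA.1.2]
  · intro A hA B hB hAB
    simp only [Finset.coe_filter, Finset.mem_powersetCard, Set.mem_ofPred_eq] at hA hB
    simp only at hAB
    rw [← Finset.insert_erase hA.2, hAB, Finset.insert_erase hB.2]

lemma m_upper (n k s : ℕ) (hk : 1 ≤ k) :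
    mStarEMC n k s ≤ s * k * (n-1).choose (k-1) := by
  classical
  apply csSup_le (m_set_nonempty n k s)
  rintro t ⟨F, hF, h2, rfl⟩
  obtain ⟨M, hM, hmax⟩ := Finset.exists_max_image
    (F.powerset.filter (fun M => ∀ A ∈ M, ∀ B ∈ M, A ≠ B → Disjoint A B)) Finset.card
    ⟨∅, by simp⟩
  simp only [Finset.mem_filter, Finset.mem_powerset] at hM hmax
  obtain ⟨hMF, hMd⟩ := hM
  have hMs : M.card ≤ s := by
    have : (M.card : ℝ) ≤ fracMatchingNumber n F := by
      apply le_csSup (frac_set_bdd n F)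
      refine ⟨fun A => if A ∈ M then 1 else 0, ?_, ?_, ?_, ?_⟩
      · intro A; dsimp only; split_ifs <;> simp
      · intro A hA
        exact if_neg (fun h => hA (hMF h))
      · intro i _
        rw [← Finset.sum_filter, Finset.sum_const, nsmul_eq_mul, mul_one]
        have : ((F.filter (fun A => i ∈ A)).filter (fun A => A ∈ M)).card ≤ 1 := by
          rw [Finset.card_le_one]
          intro A hA B hB
          simp only [Finset.mem_filter] at hA hB
          by_contra hne
          exact Finset.disjoint_left.mp (hMd A hA.2 B hB.2 hne) hA.1.2 hB.1.2
        exact_mod_cast this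
      · rw [← Finset.sum_filter, Finset.sum_const, nsmul_eq_mul, mul_one,
          Finset.filter_mem_eq_inter, Finset.inter_eq_right.mpr hMF]
    have h3 : (M.card : ℝ) < ((s + 1 : ℕ) : ℝ) := by push_cast; linarith
    have := Nat.cast_lt.mp h3
    omega
  have hcov : F ⊆ (M.biUnion id).biUnion
      (fun v => ((Finset.range n).powersetCard k).filter (fun A => v ∈ A)) := by
    intro A hA
    have hAk := Finset.mem_powersetCard.mp (hF hA)
    have hex : ∃ B ∈ M, ¬ Disjoint A B := by
      by_contra hcon
      push Not at hcon
      have hAM : A ∉ M := by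
        intro h
        have := hcon A h
        rw [disjoint_self] at this
        rw [this] at hAk
        simp at hAk
        omega
      have := hmax (insert A M) ⟨Finset.insert_subset hA hMF, by
        intro X hX Y hY hne
        rw [Finset.mem_insert] at hX hY
        rcases hX with rfl | hX <;> rcases hY with rfl | hY
        · exact absurd rfl hne
        · exact hcon Y hY
        · exact (hcon X hX).symm
        · exact hMd X hX Y hY hne⟩
      rw [Finset.card_insert_of_notMem hAM] at this
      omega
    obtain ⟨B, hB, hd⟩ := hex
    obtain ⟨v, hvA, hvB⟩ := Finset.not_disjoint_iff.mp hd
    simp only [Finset.mem_biUnion, Finset.mem_filter, id]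
    exact ⟨v, ⟨B, hB, hvB⟩, hF hA, hvA⟩
  refine (Finset.card_le_card hcov).trans ?_
  refine (Finset.card_biUnion_le_card_mul _ _ ((n-1).choose (k-1)) ?_).trans ?_
  · intro v hv
    simp only [Finset.mem_biUnion, id] at hv
    obtain ⟨B, hB, hvB⟩ := hv
    exact card_star n k v hk
      (Finset.mem_range.mp ((Finset.mem_powersetCard.mp (hF (hMF hB))).1 hvB))
  · apply Nat.mul_le_mul_right
    refine (Finset.card_biUnion_le_card_mul _ _ k ?_).trans (Nat.mul_le_mul_right _ hMs)
    intro B hB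
    exact (Finset.mem_powersetCard.mp (hF (hMF hB))).2.le

lemma a_nonneg (k : ℕ) (x : ℝ) (n : ℕ) :
    0 ≤ (mStarEMC n k ⌊x * n⌋₊ : ℝ) / (n.choose k : ℝ) := by positivity

lemma a_le_one (k : ℕ) (x : ℝ) (n : ℕ) :
    (mStarEMC n k ⌊x * n⌋₊ : ℝ) / (n.choose k : ℝ) ≤ 1 := by
  apply div_le_one_of_le₀ _ (by positivity)
  exact_mod_cast m_le_choose _ _ _

lemma a_bdd (k : ℕ) (x : ℝ) : Filter.IsBoundedUnder (· ≤ ·) Filter.atTop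
    (fun n : ℕ => (mStarEMC n k ⌊x * n⌋₊ : ℝ) / (n.choose k : ℝ)) :=
  Filter.isBoundedUnder_of ⟨1, a_le_one k x⟩

lemma a_cobdd (k : ℕ) (x : ℝ) : Filter.IsCoboundedUnder (· ≤ ·) Filter.atTop
    (fun n : ℕ => (mStarEMC n k ⌊x * n⌋₊ : ℝ) / (n.choose k : ℝ)) :=
  Filter.IsBoundedUnder.isCoboundedUnder_le (Filter.isBoundedUnder_of ⟨0, a_nonneg k x⟩)

lemma c_le {k : ℕ} {x b : ℝ} (h : ∀ᶠ n : ℕ in Filter.atTop,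
    (mStarEMC n k ⌊x * n⌋₊ : ℝ) / (n.choose k : ℝ) ≤ b) : cStar k x ≤ b :=
  Filter.limsup_le_of_le (a_cobdd k x) h

lemma c_nonneg (k : ℕ) (x : ℝ) : 0 ≤ cStar k x :=
  Filter.le_limsup_of_frequently_le (Filter.Frequently.of_forall (a_nonneg k x)) (a_bdd k x)

lemma c_mono (k : ℕ) {x y : ℝ} (h : x ≤ y) : cStar k x ≤ cStar k y := by
  apply Filter.limsup_le_limsup _ (a_cobdd k x) (a_bdd k y)
  refine Filter.Eventually.of_forall fun n => ?_
  simp only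
  gcongr
  exact m_mono k le_rfl (Nat.floor_mono (by gcongr))

lemma c_upper (k : ℕ) (hk : 1 ≤ k) {x : ℝ} (hx : 0 ≤ x) : cStar k x ≤ k ^ 2 * x := by
  apply c_le
  filter_upwards [Filter.eventually_ge_atTop (k + 1)] with n hn
  have hc : (0 : ℝ) < n.choose k := by exact_mod_cast Nat.choose_pos (by omega)
  rw [div_le_iff₀ hc]
  have h1 : (mStarEMC n k ⌊x * n⌋₊ : ℝ) ≤ ⌊x * n⌋₊ * k * (n-1).choose (k-1) := by
    exact_mod_cast m_upper n k _ hk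
  have h2 : (⌊x * n⌋₊ : ℝ) ≤ x * n := Nat.floor_le (by positivity)
  have h3 : (n : ℝ) * (n-1).choose (k-1) = n.choose k * k := by
    obtain ⟨m, rfl⟩ : ∃ m, n = m + 1 := ⟨n - 1, by omega⟩
    obtain ⟨j, rfl⟩ : ∃ j, k = j + 1 := ⟨k - 1, by omega⟩
    exact_mod_cast Nat.add_one_mul_choose_eq m j
  calc _ ≤ _ := h1
    _ ≤ x * n * k * (n-1).choose (k-1) := by gcongr
    _ = x * k * (n * (n-1).choose (k-1)) := by ring
    _ = _ := by rw [h3]; ring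

lemma ratio_tendsto (k : ℕ) {q : ℝ} (hq : 0 < q) :
    Filter.Tendsto (fun n : ℕ => (n.choose k : ℝ) / ((⌈q * n⌉₊.choose k : ℕ) : ℝ)) Filter.atTop
      (nhds ((1 / q) ^ k)) := by
  have ht : Filter.Tendsto (fun n : ℕ => ⌈q * n⌉₊) Filter.atTop Filter.atTop :=
    tendsto_nat_ceil_atTop.comp (tendsto_natCast_atTop_atTop.const_mul_atTop hq)
  have h1 := isEquivalent_choose k
  have h2 := h1.comp_tendsto ht
  refine ((h1.div h2).tendsto_nhds_iff).mpr ?_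
  have h3 : Filter.Tendsto (fun n : ℕ => (⌈q * n⌉₊ : ℝ) / n) Filter.atTop (nhds q) :=
    (tendsto_nat_ceil_mul_div_atTop hq.le).comp tendsto_natCast_atTop_atTop
  have h4 := (h3.inv₀ hq.ne').pow k
  rw [← one_div] at h4
  refine h4.congr fun n => ?_
  have hf : (k.factorial : ℝ) ≠ 0 := by positivity
  simp only [Function.comp, Pi.div_apply]
  rw [div_div_div_cancel_right₀ hf, inv_div, div_pow]

lemma c_scale (k : ℕ) {x y : ℝ} (hx : 0 < x) (h : x ≤ y) :
    (x / y) ^ k * cStar k y ≤ cStar k x := by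
  have hy : 0 < y := hx.trans_le h
  have hq : 0 < y / x := by positivity
  have hq1 : 1 ≤ y / x := (one_le_div hx).mpr h
  have hr : 0 < (x / y) ^ k := by positivity
  apply le_of_forall_pos_le_add
  intro ε hε
  rw [← le_div_iff₀' hr]
  apply c_le
  have hlt : ∀ᶠ n : ℕ in Filter.atTop,
      (mStarEMC n k ⌊x * n⌋₊ : ℝ) / (n.choose k : ℝ) < cStar k x + ε / 2 :=
    Filter.eventually_lt_of_limsup_lt (by change cStar k x < _; linarith) (a_bdd k x)
  have ht : Filter.Tendsto (fun n : ℕ => ⌈y / x * n⌉₊) Filter.atTop Filter.atTop :=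
    tendsto_nat_ceil_atTop.comp (tendsto_natCast_atTop_atTop.const_mul_atTop hq)
  have hrat := ratio_tendsto k hq
  rw [one_div_div] at hrat
  have hr2 := hrat.eventually (lt_mem_nhds (show (x / y) ^ k - ε / 2 < (x / y) ^ k by linarith))
  filter_upwards [ht.eventually hlt, hr2, Filter.eventually_ge_atTop k] with n h1 h2 hn
  rw [le_div_iff₀' hr]
  have hc : (0 : ℝ) < n.choose k := by exact_mod_cast Nat.choose_pos hn
  set n' := ⌈y / x * n⌉₊ with hn'
  have hceil : y / x * n ≤ n' := Nat.le_ceil _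
  have hnn : n ≤ n' := by
    have : (n : ℝ) ≤ n' := le_trans (le_mul_of_one_le_left (by positivity) hq1) hceil
    exact_mod_cast this
  have hm : (mStarEMC n k ⌊y * n⌋₊ : ℝ) ≤ mStarEMC n' k ⌊x * n'⌋₊ := by
    have := m_mono k hnn (s := ⌊y * n⌋₊) (s' := ⌊x * n'⌋₊) (Nat.floor_mono (by
      calc y * n = x * (y / x * n) := by field_simp
        _ ≤ _ := by gcongr))
    exact_mod_cast this
  have ha0 := a_nonneg k y n
  have ha1 := a_le_one k y n
  set a := (mStarEMC n k ⌊y * n⌋₊ : ℝ) / (n.choose k : ℝ) with ha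
  have hρ : (n.choose k : ℝ) / (n'.choose k : ℝ) * a < cStar k x + ε / 2 := by
    refine lt_of_le_of_lt ?_ h1
    have : (n.choose k : ℝ) / (n'.choose k : ℝ) * a
        = (mStarEMC n k ⌊y * n⌋₊ : ℝ) / (n'.choose k : ℝ) := by
      rw [ha]; field_simp
    rw [this]
    gcongr
  nlinarith

lemma c_cont_pos (k : ℕ) {x : ℝ} (hx : 0 < x) : ContinuousAt (cStar k) x := by
  have hb : ∀ᶠ y in nhds x, 0 < y := lt_mem_nhds hx
  have hx' : x ≠ 0 := hx.ne'
  have hlo : Filter.Tendsto (fun y => min 1 ((y / x) ^ k) * cStar k x) (nhds x)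
      (nhds (cStar k x)) := by
    have : ContinuousAt (fun y => min 1 ((y / x) ^ k) * cStar k x) x := by fun_prop
    simpa [ContinuousAt, hx'] using this
  have hhi : Filter.Tendsto (fun y => max 1 ((y / x) ^ k) * cStar k x) (nhds x)
      (nhds (cStar k x)) := by
    have : ContinuousAt (fun y => max 1 ((y / x) ^ k) * cStar k x) x := by fun_prop
    simpa [ContinuousAt, hx'] using this
  have h0 := c_nonneg k x
  refine tendsto_of_tendsto_of_tendsto_of_le_of_le' hlo hhi ?_ ?_
  · filter_upwards [hb] with y hy
    rcases le_total x y with h | h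
    · exact (mul_le_of_le_one_left h0 (min_le_left _ _)).trans (c_mono k h)
    · exact (mul_le_mul_of_nonneg_right (min_le_right _ _) h0).trans (c_scale k hy h)
  · filter_upwards [hb] with y hy
    rcases le_total x y with h | h
    · refine le_trans ?_ (mul_le_mul_of_nonneg_right (le_max_right _ _) h0)
      have := c_scale k hx h
      rw [← le_div_iff₀' (by positivity)] at this
      refine this.trans_eq ?_
      rw [div_pow, div_pow]; field_simp
    · exact (c_mono k h).trans (le_mul_of_one_le_left h0 (le_max_left _ _))

theorem cStar_monotone_continuous (k : ℕ) (hk : 2 ≤ k) :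
    MonotoneOn (cStar k) (Set.Ico (0 : ℝ) (1 / (k : ℝ))) ∧
      ContinuousOn (cStar k) (Set.Ico (0 : ℝ) (1 / (k : ℝ))) := by
  refine ⟨fun x _ y _ h => c_mono k h, ?_⟩
  intro x hx
  rcases hx.1.eq_or_lt with h | h
  · subst h
    have h0 : cStar k 0 = 0 :=
      le_antisymm (by simpa using c_upper k (by omega) le_rfl) (c_nonneg k 0)
    unfold ContinuousWithinAt
    rw [h0]
    have hhi : Filter.Tendsto (fun y : ℝ => (k : ℝ) ^ 2 * y)
        (nhdsWithin 0 (Set.Ico (0 : ℝ) (1 / (k : ℝ)))) (nhds 0) := by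
      have : ContinuousAt (fun y : ℝ => (k : ℝ) ^ 2 * y) 0 := by fun_prop
      have := this.tendsto
      simp only [mul_zero] at this
      exact this.mono_left nhdsWithin_le_nhds
    refine tendsto_of_tendsto_of_tendsto_of_le_of_le' tendsto_const_nhds hhi
      (Filter.Eventually.of_forall fun y => c_nonneg k y) ?_
    filter_upwards [self_mem_nhdsWithin] with y hy
    exact c_upper k (by omega) hy.1
  · exact (c_cont_pos k h).continuousWithinAt
end

section
/- For any integer k ≥ 1 and any real δ > 0 there exist n₀ ∈ ℕ and ε > 0 such that the following holds for every integer n ≥ n₀. Let H be an n-vertex k-uniform hypergraph (a multiset of k-element subsets of an n-element vertex set, multiple edges allowed) with maximum degree Δ(H) > 0 and average degree d(H), and suppose d(H)/Δ(H) = c > 0 and that the codegree of any two distinct vertices (the number of edges, counted with multiplicity, containing both) is at most ε·Δ(H). Then H contains a matching, i.e., a collection of pairwise disjoint edges, covering at least (c − δ)·n vertices. -/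
open Finset

namespace Nib
set_option linter.unusedSectionVars false

/-- expectation over a p-random subset of W -/
noncomputable def Ex {α : Type*} [DecidableEq α] (p : ℝ) (W : Finset α) (F : Finset α → ℝ) : ℝ :=
  ∑ S ∈ W.powerset, p ^ S.card * (1 - p) ^ (W.card - S.card) * F S

noncomputable def av {α : Type*} [DecidableEq α] (A S : Finset α) : ℝ :=
  if Disjoint S A then 1 else 0

section
variable {α : Type*} [DecidableEq α] {p : ℝ} {W : Finset α}

lemma Ex_av {A : Finset α} (hA : A ⊆ W) : Ex p W (av A) = (1 - p) ^ A.card := by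
  unfold Ex av
  have h1 : ∑ S ∈ W.powerset, p ^ S.card * (1 - p) ^ (W.card - S.card) *
      (if Disjoint S A then (1:ℝ) else 0) =
      ∑ S ∈ W.powerset.filter (fun S => Disjoint S A),
        p ^ S.card * (1 - p) ^ (W.card - S.card) := by
    rw [Finset.sum_filter]
    refine Finset.sum_congr rfl fun S _ => ?_
    split_ifs <;> simp
  have h2 : W.powerset.filter (fun S => Disjoint S A) = (W \ A).powerset := by
    ext S
    simp [Finset.subset_sdiff]
  rw [h1, h2]
  have h3 := Finset.sum_pow_mul_eq_add_pow p (1 - p) (W \ A)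
  have hc : (W \ A).card + A.card = W.card := Finset.card_sdiff_add_card_eq_card hA
  calc _ = ∑ S ∈ (W \ A).powerset, (1 - p) ^ A.card *
        (p ^ S.card * (1 - p) ^ ((W \ A).card - S.card)) := by
        refine Finset.sum_congr rfl fun S hS => ?_
        have := Finset.card_le_card (Finset.mem_powerset.1 hS)
        have e : W.card - S.card = A.card + ((W \ A).card - S.card) := by omega
        rw [e, pow_add]; ring
    _ = _ := by rw [← Finset.mul_sum, h3]; simp

lemma Ex_add (F G : Finset α → ℝ) : Ex p W (fun S => F S + G S) = Ex p W F + Ex p W G := by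
  simp [Ex, mul_add, Finset.sum_add_distrib]

lemma Ex_sub (F G : Finset α → ℝ) : Ex p W (fun S => F S - G S) = Ex p W F - Ex p W G := by
  simp [Ex, mul_sub, Finset.sum_sub_distrib]

lemma Ex_mul (c : ℝ) (F : Finset α → ℝ) : Ex p W (fun S => c * F S) = c * Ex p W F := by
  simp only [Ex, Finset.mul_sum]
  exact Finset.sum_congr rfl fun S _ => by ring

lemma Ex_sum {β : Type*} (s : Finset β) (F : β → Finset α → ℝ) :
    Ex p W (fun S => ∑ b ∈ s, F b S) = ∑ b ∈ s, Ex p W (F b) := by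
  simp only [Ex, Finset.mul_sum]
  exact Finset.sum_comm

lemma Ex_const (c : ℝ) : Ex p W (fun _ => c) = c := by
  have := Ex_av (p := p) (W := W) (A := ∅) (by simp)
  have h2 := Ex_mul (p := p) (W := W) c (av ∅)
  rw [this] at h2
  simpa [av] using h2

lemma Ex_mono (hp : 0 ≤ p) (hp1 : p ≤ 1) {F G : Finset α → ℝ} (h : ∀ S, S ⊆ W → F S ≤ G S) :
    Ex p W F ≤ Ex p W G := by
  unfold Ex
  refine Finset.sum_le_sum fun S hS => ?_
  have : 0 ≤ 1 - p := by linarith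
  exact mul_le_mul_of_nonneg_left (h S (Finset.mem_powerset.1 hS)) (by positivity)

lemma Ex_exists (hp : 0 ≤ p) (hp1 : p ≤ 1) {F : Finset α → ℝ} {c : ℝ} (h : c ≤ Ex p W F) :
    ∃ S, S ⊆ W ∧ c ≤ F S := by
  by_contra! hc
  have hle := Ex_mono (W := W) hp hp1 (F := F) (G := fun _ => c) (fun S hS => (hc S hS).le)
  rw [Ex_const] at hle
  have heq : c = Ex p W F := le_antisymm h hle
  have h0 : Ex p W (fun S => c - F S) = 0 := by rw [Ex_sub, Ex_const, ← heq]; ring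
  have hq : 0 ≤ 1 - p := by linarith
  unfold Ex at h0
  rw [Finset.sum_eq_zero_iff_of_nonneg] at h0
  · have h1 : Ex p W (fun _ => (1:ℝ)) = 0 := by
      unfold Ex
      refine Finset.sum_eq_zero fun S hS => ?_
      have := h0 S hS
      have h2 := hc S (Finset.mem_powerset.1 hS)
      rcases mul_eq_zero.1 this with h | h
      · rw [h]; simp
      · linarith
    rw [Ex_const] at h1
    norm_num at h1
  · intro S hS
    have h2 := hc S (Finset.mem_powerset.1 hS)
    have : 0 ≤ c - F S := by linarith
    positivity

lemma av_mul (A B S : Finset α) : av A S * av B S = av (A ∪ B) S := by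
  unfold av
  simp only [Finset.disjoint_union_right]
  split_ifs <;> simp_all

lemma av_nonneg (A S : Finset α) : 0 ≤ av A S := by
  unfold av; split_ifs <;> norm_num

end

section
variable {α V : Type*} [DecidableEq α] [DecidableEq V]

/-- the hyperedges (coins) at v -/
def Nb (g : α → Finset V) (W : Finset α) (v : V) : Finset α := W.filter (fun a => v ∈ g a)

def NS (g : α → Finset V) (W : Finset α) (Z : Finset V) : Finset α := Z.biUnion (Nb g W)

lemma Nb_sub (g : α → Finset V) (W : Finset α) (v : V) : Nb g W v ⊆ W := Finset.filter_subset _ _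

lemma NS_sub (g : α → Finset V) (W : Finset α) (Z : Finset V) : NS g W Z ⊆ W :=
  Finset.biUnion_subset.2 fun v _ => Nb_sub g W v

lemma NS_card_le {g : α → Finset V} {W : Finset α} {U Z : Finset V} {D : ℕ}
    (hD : ∀ v ∈ U, (Nb g W v).card = D) (hZ : Z ⊆ U) : (NS g W Z).card ≤ Z.card * D :=
  Finset.card_biUnion_le_card_mul _ _ _ fun v hv => (hD v (hZ hv)).le

lemma NS_card_ge {g : α → Finset V} {W : Finset α} {U : Finset V} {D κ : ℕ}
    (hD : ∀ v ∈ U, (Nb g W v).card = D)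
    (hκ : ∀ u ∈ U, ∀ v ∈ U, u ≠ v → (Nb g W u ∩ Nb g W v).card ≤ κ)
    (Z : Finset V) (hZ : Z ⊆ U) : Z.card * D ≤ (NS g W Z).card + Z.card ^ 2 * κ := by
  induction Z using Finset.induction_on with
  | empty => simp
  | insert u Z hu ih =>
    have hZU : Z ⊆ U := fun x hx => hZ (Finset.mem_insert_of_mem hx)
    have huU := hZ (Finset.mem_insert_self u Z)
    have ih := ih hZU
    have e : NS g W (insert u Z) = Nb g W u ∪ NS g W Z := by
      unfold NS; rw [Finset.biUnion_insert]
    have h1 := Finset.card_union_add_card_inter (Nb g W u) (NS g W Z)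
    have h2 : (Nb g W u ∩ NS g W Z).card ≤ Z.card * κ := by
      unfold NS
      rw [Finset.inter_biUnion]
      refine Finset.card_biUnion_le_card_mul _ _ _ fun v hv => ?_
      exact hκ u huU v (hZU hv) (by rintro rfl; exact hu hv)
    rw [e, Finset.card_insert_of_notMem hu]
    rw [hD u huU] at h1
    nlinarith [Nat.zero_le κ, Nat.zero_le Z.card, Nat.zero_le (Z.card * κ)]

end

section
variable {α V : Type*} [DecidableEq α] [DecidableEq V]

structure Setup (g : α → Finset V) (W E : Finset α) (U : Finset V) (D κ k : ℕ) : Prop where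
  hk1 : 1 ≤ k
  hEW : E ⊆ W
  hk : ∀ e ∈ E, (g e).card = k
  hU : ∀ e ∈ E, g e ⊆ U
  hD : ∀ v ∈ U, (Nb g W v).card = D
  hκ : ∀ u ∈ U, ∀ v ∈ U, u ≠ v → (Nb g W u ∩ Nb g W v).card ≤ κ

noncomputable def Y (g : α → Finset V) (W E : Finset α) (v : V) (S : Finset α) : ℝ :=
  ∑ e ∈ Nb g E v, av (NS g W (g e) \ Nb g W v) S

variable {g : α → Finset V} {W E : Finset α} {U : Finset V} {D κ k : ℕ} {p : ℝ}

lemma Setup.cardA (h : Setup g W E U D κ k) {v : V} {e : α} (he : e ∈ Nb g E v) :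
    (NS g W (g e) \ Nb g W v).card ≤ (k - 1) * D := by
  obtain ⟨he, hv⟩ := Finset.mem_filter.1 he
  have hs : Nb g W v ⊆ NS g W (g e) := Finset.subset_biUnion_of_mem (Nb g W) hv
  have h1 := Finset.card_sdiff_add_card_eq_card hs
  rw [h.hD v (h.hU e he hv)] at h1
  have h2 := NS_card_le h.hD (h.hU e he)
  rw [h.hk e he] at h2
  rw [Nat.sub_mul]
  omega

lemma Setup.cardAA (h : Setup g W E U D κ k) {v : V} {e f : α} (he : e ∈ Nb g E v)
    (hf : f ∈ Nb g E v) (hg : g e ∩ g f = {v}) :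
    2 * ((k - 1) * D) ≤ ((NS g W (g e) \ Nb g W v) ∪ (NS g W (g f) \ Nb g W v)).card
      + 4 * k ^ 2 * κ := by
  obtain ⟨he, hv⟩ := Finset.mem_filter.1 he
  obtain ⟨hf, hvf⟩ := Finset.mem_filter.1 hf
  have e1 : (NS g W (g e) \ Nb g W v) ∪ (NS g W (g f) \ Nb g W v) =
      NS g W (g e ∪ g f) \ Nb g W v := by
    rw [← Finset.union_sdiff_distrib]
    unfold NS
    rw [Finset.union_biUnion]
  rw [e1]
  have hs : Nb g W v ⊆ NS g W (g e ∪ g f) :=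
    Finset.subset_biUnion_of_mem (Nb g W) (Finset.mem_union_left _ hv)
  have h1 := Finset.card_sdiff_add_card_eq_card hs
  rw [h.hD v (h.hU e he hv)] at h1
  have h2 := NS_card_ge h.hD h.hκ (g e ∪ g f) (Finset.union_subset (h.hU e he) (h.hU f hf))
  have h3 := Finset.card_union_add_card_inter (g e) (g f)
  rw [hg, h.hk e he, h.hk f hf, Finset.card_singleton] at h3
  obtain ⟨j, rfl⟩ : ∃ j, k = j + 1 := ⟨k - 1, by have := h.hk1; omega⟩
  have h4 : (g e ∪ g f).card = 2 * j + 1 := by omega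
  rw [h4] at h2
  simp only [Nat.add_sub_cancel]
  nlinarith [Nat.zero_le κ, Nat.zero_le (j * κ), Nat.zero_le (j * j * κ)]

lemma Setup.bad (h : Setup g W E U D κ k) {v : V} {e : α} (he : e ∈ Nb g E v) :
    ((Nb g E v).filter (fun f => g e ∩ g f ≠ {v})).card ≤ k * κ := by
  obtain ⟨he, hv⟩ := Finset.mem_filter.1 he
  have hs : (Nb g E v).filter (fun f => g e ∩ g f ≠ {v}) ⊆
      ((g e).erase v).biUnion (fun u => Nb g W u ∩ Nb g W v) := by
    intro f hf
    obtain ⟨hf, hne⟩ := Finset.mem_filter.1 hf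
    obtain ⟨hf, hvf⟩ := Finset.mem_filter.1 hf
    have : ∃ u ∈ g e ∩ g f, u ≠ v := by
      by_contra! hc
      exact hne (Finset.eq_singleton_iff_unique_mem.2 ⟨Finset.mem_inter.2 ⟨hv, hvf⟩, hc⟩)
    obtain ⟨u, hu, huv⟩ := this
    have hu := Finset.mem_inter.1 hu
    have hfW := h.hEW hf
    simp only [Finset.mem_biUnion, Finset.mem_erase, Finset.mem_inter, Nb, Finset.mem_filter]
    exact ⟨u, ⟨huv, hu.1⟩, ⟨hfW, hu.2⟩, hfW, hvf⟩
  refine (Finset.card_le_card hs).trans ?_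
  refine (Finset.card_biUnion_le_card_mul _ _ κ fun u hu => ?_).trans ?_
  · obtain ⟨huv, hu⟩ := Finset.mem_erase.1 hu
    exact h.hκ u (h.hU e he hu) v (h.hU e he hv) huv
  · refine Nat.mul_le_mul_right _ ?_
    rw [← h.hk e he]
    exact Finset.card_le_card (Finset.erase_subset _ _)

lemma Setup.pair (h : Setup g W E U D κ k) (hp : 0 ≤ p) (hp1 : p < 1) {v : V} {e f : α}
    (he : e ∈ Nb g E v) (hf : f ∈ Nb g E v) :
    Ex p W (fun S => (av (NS g W (g e) \ Nb g W v) S - (1 - p) ^ ((k - 1) * D)) *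
        (av (NS g W (g f) \ Nb g W v) S - (1 - p) ^ ((k - 1) * D)))
      ≤ 4 * k ^ 2 * κ * p + (if g e ∩ g f ≠ {v} then 1 else 0) := by
  set A := NS g W (g e) \ Nb g W v with hA
  set B := NS g W (g f) \ Nb g W v with hB
  set m := (1 - p) ^ ((k - 1) * D) with hm
  have hq0 : 0 ≤ 1 - p := by linarith
  have hq1 : 1 - p ≤ 1 := by linarith
  have hAW : A ⊆ W := Finset.sdiff_subset.trans (NS_sub g W _)
  have hBW : B ⊆ W := Finset.sdiff_subset.trans (NS_sub g W _)
  have e1 : Ex p W (fun S => (av A S - m) * (av B S - m)) =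
      (1 - p) ^ (A ∪ B).card - m * (1 - p) ^ A.card - m * (1 - p) ^ B.card + m * m := by
    have : (fun S => (av A S - m) * (av B S - m)) =
        fun S => (av (A ∪ B) S - m * av A S - m * av B S) + m * m := by
      funext S; rw [← av_mul]; ring
    rw [this, Ex_add, Ex_const, Ex_sub, Ex_sub, Ex_mul, Ex_mul, Ex_av hAW, Ex_av hBW,
      Ex_av (Finset.union_subset hAW hBW)]
  rw [e1]
  have hm0 : 0 ≤ m := by positivity
  have a1 : m ≤ (1 - p) ^ A.card := pow_le_pow_of_le_one hq0 hq1 (h.cardA he)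
  have a2 : m ≤ (1 - p) ^ B.card := pow_le_pow_of_le_one hq0 hq1 (h.cardA hf)
  have b1 := mul_le_mul_of_nonneg_left a1 hm0
  have b2 := mul_le_mul_of_nonneg_left a2 hm0
  have c1 : (1 - p) ^ (A ∪ B).card ≤ 1 := pow_le_one₀ hq0 hq1
  have c0 : 0 ≤ (1 - p) ^ (A ∪ B).card := by positivity
  have hkp : 0 ≤ 4 * (k:ℝ) ^ 2 * κ * p := by positivity
  split_ifs with hbad
  · nlinarith
  · have hg : g e ∩ g f = {v} := by simpa using hbad
    have hc := h.cardAA he hf hg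
    have d1 : (1 - p) ^ ((A ∪ B).card + 4 * k ^ 2 * κ) ≤ m * m := by
      rw [hm, ← pow_add, ← two_mul]
      exact pow_le_pow_of_le_one hq0 hq1 hc
    have d2 := one_add_mul_le_pow (a := -p) (by linarith) (4 * k ^ 2 * κ)
    rw [pow_add] at d1
    push_cast at d2
    have d3 := mul_le_mul_of_nonneg_left d2 c0
    have d4 := mul_le_mul_of_nonneg_right c1 hkp
    rw [← sub_eq_add_neg] at d3
    nlinarith

lemma Setup.var (h : Setup g W E U D κ k) (hp : 0 ≤ p) (hp1 : p < 1) (v : V) :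
    Ex p W (fun S => (Y g W E v S - (Nb g E v).card * (1 - p) ^ ((k - 1) * D)) ^ 2)
      ≤ ((Nb g E v).card : ℝ) ^ 2 * (4 * k ^ 2 * κ * p) + (Nb g E v).card * (k * κ) := by
  set m := (1 - p) ^ ((k - 1) * D) with hm
  have e1 : (fun S => (Y g W E v S - (Nb g E v).card * m) ^ 2) = fun S =>
      ∑ e ∈ Nb g E v, ∑ f ∈ Nb g E v, (av (NS g W (g e) \ Nb g W v) S - m) *
        (av (NS g W (g f) \ Nb g W v) S - m) := by
    funext S
    rw [← Finset.sum_mul_sum, ← sq]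
    simp [Y, Finset.sum_sub_distrib]
  rw [e1, Ex_sum]
  have key : ∀ e ∈ Nb g E v, Ex p W (fun S => ∑ f ∈ Nb g E v,
      (av (NS g W (g e) \ Nb g W v) S - m) * (av (NS g W (g f) \ Nb g W v) S - m)) ≤
      (Nb g E v).card * (4 * k ^ 2 * κ * p) + k * κ := by
    intro e he
    rw [Ex_sum]
    refine (Finset.sum_le_sum fun f hf => h.pair hp hp1 he hf).trans ?_
    rw [Finset.sum_add_distrib, Finset.sum_const, nsmul_eq_mul, ← Finset.sum_filter]
    have := h.bad he
    have h2 : (((Nb g E v).filter (fun f => g e ∩ g f ≠ {v})).card : ℝ) ≤ k * κ := by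
      exact_mod_cast this
    simp only [Finset.sum_const, nsmul_eq_mul, mul_one]
    linarith
  refine (Finset.sum_le_sum key).trans ?_
  rw [Finset.sum_const, nsmul_eq_mul]
  apply le_of_eq; ring

end

section
variable {α V : Type*} [DecidableEq α] [DecidableEq V]
variable {g : α → Finset V} {W E : Finset α} {U : Finset V} {D κ k : ℕ} {p : ℝ}

lemma Setup.degle (h : Setup g W E U D κ k) {v : V} (hv : v ∈ U) : (Nb g E v).card ≤ D := by
  rw [← h.hD v hv]
  exact Finset.card_le_card (Finset.filter_subset_filter _ h.hEW)

lemma Setup.tail (h : Setup g W E U D κ k) {θ lam σ η : ℝ} (hD : 1 ≤ D) (hθ : 0 < θ)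
    (hθ1 : θ < 1) (hlam : 0 < lam) (hη : (κ : ℝ) ≤ η * D)
    (hησ : 5 * (k:ℝ) ^ 2 * η ≤ σ * lam ^ 2) {v : V} (hv : v ∈ U) :
    Ex (θ / D) W (fun S => if Y g W E v S ≤ ((1 - θ / D) ^ ((k - 1) * D) + lam) * D
      then 0 else 1) ≤ σ := by
  have hD' : (1:ℝ) ≤ D := by exact_mod_cast hD
  have hp : 0 ≤ θ / D := by positivity
  have hp1 : θ / D < 1 := by rw [div_lt_one (by linarith)]; linarith
  set p := θ / D with hpdef
  set m := (1 - p) ^ ((k - 1) * D) with hm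
  have hm0 : 0 ≤ m := by
    have : 0 ≤ 1 - p := by linarith
    positivity
  have hvar := h.var hp hp1 v
  rw [← hm] at hvar
  set d : ℝ := ((Nb g E v).card : ℝ) with hd
  have hdD : d ≤ D := by rw [hd]; exact_mod_cast h.degle hv
  have hd0 : 0 ≤ d := by positivity
  have h1 : Ex p W (fun S => (lam * D) ^ 2 * (if Y g W E v S ≤ (m + lam) * D then 0 else 1)) ≤
      Ex p W (fun S => (Y g W E v S - d * m) ^ 2) := by
    refine Ex_mono hp hp1.le fun S _ => ?_
    split_ifs with hY
    · simp only [mul_zero]; positivity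
    · push Not at hY
      have : lam * D ≤ Y g W E v S - d * m := by nlinarith
      rw [mul_one]
      exact pow_le_pow_left₀ (by positivity) this 2
  rw [Ex_mul] at h1
  have hk1 : (1:ℝ) ≤ k := by exact_mod_cast h.hk1
  have hκ0 : (0:ℝ) ≤ κ := by positivity
  have hpD : p * D ≤ 1 := by rw [hpdef, div_mul_cancel₀ _ (by linarith)]; exact hθ1.le
  have h2 : d ^ 2 * (4 * k ^ 2 * κ * p) ≤ 4 * k ^ 2 * κ * D := by
    have : d ^ 2 * p ≤ D := by
      have : d ^ 2 ≤ D ^ 2 := pow_le_pow_left₀ hd0 hdD 2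
      calc d ^ 2 * p ≤ D ^ 2 * p := by gcongr
        _ = D * (p * D) := by ring
        _ ≤ D * 1 := by gcongr
        _ = D := mul_one _
    calc d ^ 2 * (4 * k ^ 2 * κ * p) = (4 * k ^ 2 * κ) * (d ^ 2 * p) := by ring
      _ ≤ _ := by gcongr
  have h3 : d * (k * κ) ≤ k ^ 2 * κ * D := by
    have : (k:ℝ) ≤ k ^ 2 := by nlinarith
    calc d * (k * κ) ≤ D * (k ^ 2 * κ) := by gcongr
      _ = _ := by ring
  have h4 : (5 * (k:ℝ) ^ 2 * D) * κ ≤ (5 * (k:ℝ) ^ 2 * D) * (η * D) := by gcongr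
  have h5 : 5 * (k:ℝ) ^ 2 * η * D ^ 2 ≤ σ * lam ^ 2 * D ^ 2 := by gcongr
  have hpos : 0 < (lam * D) ^ 2 := by positivity
  refine le_of_mul_le_mul_left ?_ hpos
  nlinarith

lemma numeric {q θ : ℝ} {j : ℕ} (hq : 1 - θ ≤ q) (hq1 : q ≤ 1) (hθ : 0 < θ)
    (hjθ : ((j:ℝ) + 1) * θ ≤ 1 / 2) :
    1 - ((j:ℝ) + 2) * θ ^ 2 ≤
      θ * q ^ (j + 1) + (q ^ (j + 1) - θ ^ 2 / 4) / (q ^ j + θ ^ 2 / 4) := by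
  have hj : (0:ℝ) ≤ j := by positivity
  have hθ2 : θ ≤ 1 / 2 := by nlinarith
  have hb : ∀ i : ℕ, 1 - i * θ ≤ q ^ i := by
    intro i
    have := one_add_mul_le_pow (a := -θ) (by linarith) i
    have h2 : (1 + -θ) ^ i ≤ q ^ i := pow_le_pow_left₀ (by linarith) (by linarith) i
    linarith
  have b1 := hb j
  have b2 := hb (j + 1)
  push_cast at b2
  have hm : 1 / 2 ≤ q ^ j := by nlinarith
  set m := q ^ j with hmdef
  have e : q ^ (j + 1) = q * m := by rw [pow_succ, mul_comm]
  rw [e] at b2 ⊢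
  have c1 : q - θ ^ 2 ≤ (q * m - θ ^ 2 / 4) / (m + θ ^ 2 / 4) := by
    rw [le_div_iff₀ (by positivity)]
    have : 0 < θ ^ 2 := by positivity
    nlinarith [mul_le_mul_of_nonneg_left hm this.le, mul_le_mul_of_nonneg_left hq1 this.le,
      mul_pos this this]
  nlinarith [mul_le_mul_of_nonneg_left b2 hθ.le]

set_option maxHeartbeats 1600000 in
lemma Setup.step (h : Setup g W E U D κ k) {θ η x y : ℝ} (hD : 2 ≤ D) (hθ : 0 < θ)
    (hkθ : (k:ℝ) * θ ≤ 1 / 2) (hη : (κ : ℝ) ≤ η * D)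
    (hησ : 5 * (k:ℝ) ^ 2 * η ≤ θ ^ 2 / (4 * k) * (θ ^ 2 / 4) ^ 2)
    (hx : 0 ≤ x) (hx1 : x ≤ 1) (hy : 0 ≤ y) :
    ∃ (M E' : Finset α) (U' : Finset V) (D' : ℕ), M ⊆ E ∧ E' ⊆ E ∧ U' ⊆ U ∧
      (∀ e ∈ M, ∀ f ∈ M, e ≠ f → Disjoint (g e) (g f)) ∧
      (∀ e ∈ M, Disjoint (g e) U') ∧ (∀ e ∈ E', g e ⊆ U') ∧
      (∀ v ∈ U', (Nb g E' v).card ≤ D') ∧ D ≤ 4 * D' ∧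
      x * (1 - (k + 1) * θ ^ 2) * E.card / D - y * (1 - θ / 2) * U.card ≤
        M.card + x * E'.card / D' - y * U'.card := by
  have hk1 : (1:ℝ) ≤ k := by exact_mod_cast h.hk1
  have hθ2 : θ ≤ 1 / 2 := by nlinarith
  have hD2 : (2:ℝ) ≤ D := by exact_mod_cast hD
  have hp : 0 ≤ θ / D := by positivity
  have hp1 : θ / D < 1 := by rw [div_lt_one (by linarith)]; linarith
  have htail := fun v (hv : v ∈ U) => h.tail (by omega) hθ (by linarith)
    (by positivity : 0 < θ ^ 2 / 4) hη hησ hv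
  set p := θ / D with hpdef
  set lam := θ ^ 2 / 4 with hlam
  set q := (1 - p) ^ D with hq
  have hpD : D * p = θ := by rw [hpdef]; field_simp
  have hq1 : 1 - θ ≤ q := by
    have := one_add_mul_le_pow (a := -p) (by linarith) D
    rw [← sub_eq_add_neg] at this
    nlinarith
  have hp0' : 0 ≤ 1 - p := by linarith
  have hp1' : 1 - p ≤ 1 := by linarith
  have hq2 : q ≤ 1 := pow_le_one₀ hp0' hp1'
  have hq3 : q ≤ 1 - θ / 2 := by
    have a1 : q ≤ Real.exp (-θ) := by
      have : 1 - p ≤ Real.exp (-p) := by linarith [Real.add_one_le_exp (-p)]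
      calc q ≤ Real.exp (-p) ^ D := pow_le_pow_left₀ hp0' this D
        _ = Real.exp (-θ) := by rw [← Real.exp_nat_mul]; congr 1; linarith
    have a2 : Real.exp (-θ) ≤ 1 - θ / 2 := by
      have hpos := Real.exp_pos (-θ)
      have b : θ + 1 ≤ Real.exp θ := Real.add_one_le_exp θ
      have c : Real.exp (-θ) * Real.exp θ = 1 := by rw [← Real.exp_add]; simp
      have d : Real.exp (-θ) * (θ + 1) ≤ 1 := by nlinarith
      nlinarith
    linarith
  obtain ⟨j, hj⟩ : ∃ j, k = j + 1 := ⟨k - 1, by have := h.hk1; omega⟩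
  have hmq : (1 - p) ^ ((k - 1) * D) = q ^ j := by
    rw [hq, ← pow_mul, hj, Nat.add_sub_cancel, mul_comm]
  rw [hmq] at htail
  have hQ : (1 - p) ^ (k * D) = q ^ (j + 1) := by
    rw [hq, ← pow_mul, hj, mul_comm]
  have hkj : (k:ℝ) = j + 1 := by rw [hj]; push_cast; ring
  have hnum := numeric (j := j) hq1 hq2 hθ (by rw [← hkj]; exact hkθ)
  have hb : ∀ i : ℕ, 1 - i * θ ≤ q ^ i := by
    intro i
    have := one_add_mul_le_pow (a := -θ) (by linarith) i
    have h2 : (1 + -θ) ^ i ≤ q ^ i := pow_le_pow_left₀ (by linarith) (by linarith) i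
    linarith
  have hm2 : 1 / 2 ≤ q ^ j := by have := hb j; nlinarith
  have hQ2 : 1 / 2 ≤ q ^ (j + 1) := by have := hb (j + 1); push_cast at this; nlinarith
  set R := (q ^ j + lam) * D with hR
  have hlam0 : 0 < lam := by positivity
  have hR1 : (D:ℝ) / 2 ≤ R := by rw [hR]; nlinarith
  have hDp4 : D ≤ 4 * ⌊R⌋₊ := by
    have a1 := Nat.lt_floor_add_one R
    have a2 : 1 ≤ ⌊R⌋₊ := Nat.le_floor (by push_cast; linarith)
    have a3 : (D:ℝ) < 2 * (⌊R⌋₊ + 1) := by linarith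
    have a4 : D < 2 * (⌊R⌋₊ + 1) := by exact_mod_cast a3
    omega
  have hDp1 : 0 < ⌊R⌋₊ := by omega
  have hDpR : (⌊R⌋₊ : ℝ) ≤ R := Nat.floor_le (by linarith)
  set D' := ⌊R⌋₊ with hD'
  have hD'0 : (0:ℝ) < D' := by exact_mod_cast hDp1
  -- the random objects
  let Mf : Finset α → Finset α := fun S => E.filter (fun e => S ∩ NS g W (g e) = {e})
  let Ef : Finset α → Finset α := fun S =>
    E.filter (fun e => Disjoint S (NS g W (g e)) ∧ ∀ v ∈ g e, Y g W E v S ≤ R)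
  let Uf : Finset α → Finset V := fun S => U.filter (fun v => Disjoint S (Nb g W v))
  have memNS : ∀ e ∈ E, ∀ f ∈ E, ∀ v, v ∈ g e → v ∈ g f → e ∈ NS g W (g f) := by
    intro e he f hf v hve hvf
    exact Finset.mem_biUnion.2 ⟨v, hvf, Finset.mem_filter.2 ⟨h.hEW he, hve⟩⟩
  have selfNS : ∀ e ∈ E, e ∈ NS g W (g e) := by
    intro e he
    have : (g e).Nonempty := by
      rw [← Finset.card_pos, h.hk e he]; exact h.hk1
    obtain ⟨v, hv⟩ := this
    exact memNS e he e he v hv hv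
  -- expectations
  have exM : (E.card : ℝ) * (p * q ^ (j + 1)) ≤ Ex p W (fun S => ((Mf S).card : ℝ)) := by
    have e1 : (fun S => ((Mf S).card : ℝ)) = fun S => ∑ e ∈ E,
        (av (NS g W (g e) \ {e}) S - av (NS g W (g e)) S) := by
      funext S
      rw [Finset.card_filter]
      push_cast
      refine Finset.sum_congr rfl fun e he => ?_
      have hee := selfNS e he
      unfold av
      by_cases c1 : S ∩ NS g W (g e) = {e}
      · have d1 : Disjoint S (NS g W (g e) \ {e}) := by
          rw [Finset.disjoint_left]
          intro a ha hb
          have hb := Finset.mem_sdiff.1 hb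
          have : a ∈ S ∩ NS g W (g e) := Finset.mem_inter.2 ⟨ha, hb.1⟩
          rw [c1] at this
          exact hb.2 this
        have d2 : ¬ Disjoint S (NS g W (g e)) := by
          rw [Finset.disjoint_iff_inter_eq_empty, c1]; simp
        simp [c1, d1, d2]
      · rw [if_neg c1]
        by_cases d2 : Disjoint S (NS g W (g e))
        · have d1 : Disjoint S (NS g W (g e) \ {e}) := d2.mono_right Finset.sdiff_subset
          simp [d1, d2]
        · have d1 : ¬ Disjoint S (NS g W (g e) \ {e}) := by
            intro d1
            apply c1
            have hsub : S ∩ NS g W (g e) ⊆ {e} := by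
              intro a ha
              have ha := Finset.mem_inter.1 ha
              by_contra hne
              exact Finset.disjoint_left.1 d1 ha.1 (Finset.mem_sdiff.2 ⟨ha.2, hne⟩)
            rcases Finset.subset_singleton_iff.1 hsub with h0 | h0
            · exact absurd (Finset.disjoint_iff_inter_eq_empty.2 h0) d2
            · exact h0
          simp [d1, d2]
    rw [e1, Ex_sum, ← nsmul_eq_mul]
    refine Finset.card_nsmul_le_sum _ _ _ fun e he => ?_
    rw [Ex_sub, Ex_av (NS_sub g W _), Ex_av (Finset.sdiff_subset.trans (NS_sub g W _))]
    have hee := selfNS e he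
    have c1 : (NS g W (g e) \ {e}).card + 1 = (NS g W (g e)).card := by
      have := Finset.card_sdiff_add_card_eq_card (Finset.singleton_subset_iff.2 hee)
      simpa using this
    have c2 := NS_card_le h.hD (h.hU e he)
    rw [h.hk e he] at c2
    have c3 : q ^ (j + 1) ≤ (1 - p) ^ (NS g W (g e) \ {e}).card := by
      rw [← hQ]; exact pow_le_pow_of_le_one hp0' hp1' (by omega)
    rw [← c1, pow_succ (1 - p)]
    have c4 := mul_le_mul_of_nonneg_left c3 hp
    linarith
  have exE : (E.card : ℝ) * (q ^ (j + 1) - θ ^ 2 / 4) ≤ Ex p W (fun S => ((Ef S).card : ℝ)) := by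
    have e1 : Ex p W (fun S => ∑ e ∈ E, (av (NS g W (g e)) S -
        ∑ v ∈ g e, (if Y g W E v S ≤ R then (0:ℝ) else 1))) ≤
        Ex p W (fun S => ((Ef S).card : ℝ)) := by
      refine Ex_mono hp hp1.le fun S _ => ?_
      rw [Finset.card_filter]
      push_cast
      refine Finset.sum_le_sum fun e he => ?_
      have hnn : ∀ v ∈ g e, (0:ℝ) ≤ (if Y g W E v S ≤ R then (0:ℝ) else 1) := by
        intro v _; split_ifs <;> norm_num
      have hs := Finset.sum_nonneg hnn
      unfold av
      by_cases d1 : Disjoint S (NS g W (g e))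
      · by_cases d2 : ∀ v ∈ g e, Y g W E v S ≤ R
        · rw [if_pos d1, if_pos ⟨d1, d2⟩]; linarith
        · rw [if_pos d1, if_neg (fun hh => d2 hh.2)]
          push Not at d2
          obtain ⟨v, hv, hvY⟩ := d2
          have := Finset.single_le_sum hnn hv
          rw [if_neg (not_le.2 hvY)] at this
          linarith
      · rw [if_neg d1, if_neg (fun hh => d1 hh.1)]; linarith
    refine le_trans ?_ e1
    rw [Ex_sum, ← nsmul_eq_mul]
    refine Finset.card_nsmul_le_sum _ _ _ fun e he => ?_
    rw [Ex_sub, Ex_av (NS_sub g W _), Ex_sum]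
    have c2 := NS_card_le h.hD (h.hU e he)
    rw [h.hk e he] at c2
    have c3 : q ^ (j + 1) ≤ (1 - p) ^ (NS g W (g e)).card := by
      rw [← hQ]; exact pow_le_pow_of_le_one hp0' hp1' c2
    have c4 := Finset.sum_le_card_nsmul (g e) _ _ (fun v hv => htail v (h.hU e he hv))
    rw [h.hk e he, nsmul_eq_mul] at c4
    have c5 : (k:ℝ) * (θ ^ 2 / (4 * k)) = θ ^ 2 / 4 := by field_simp
    linarith
  have exU : Ex p W (fun S => ((Uf S).card : ℝ)) = U.card * q := by
    have e1 : (fun S => ((Uf S).card : ℝ)) = fun S => ∑ v ∈ U, av (Nb g W v) S := by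
      funext S
      rw [Finset.card_filter]
      push_cast
      rfl
    rw [e1, Ex_sum, ← nsmul_eq_mul]
    refine Finset.sum_eq_card_nsmul fun v hv => ?_
    rw [Ex_av (Nb_sub g W v), h.hD v hv]
  have total : x * (1 - (k + 1) * θ ^ 2) * E.card / D - y * (1 - θ / 2) * U.card ≤
      Ex p W (fun S => ((Mf S).card : ℝ) + (x / D') * (Ef S).card - y * (Uf S).card) := by
    rw [Ex_sub, Ex_add, Ex_mul, Ex_mul, exU]
    have u1 : y * (U.card * q) ≤ y * (U.card * (1 - θ / 2)) := by gcongr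
    have v1 : (x / D') * ((E.card : ℝ) * (q ^ (j + 1) - θ ^ 2 / 4)) ≤
        (x / D') * Ex p W (fun S => ((Ef S).card : ℝ)) := by gcongr
    have hpos : 0 ≤ q ^ (j + 1) - θ ^ 2 / 4 := by nlinarith
    have v2 : x / R ≤ x / D' := by gcongr
    have v3 : (x / R) * ((E.card : ℝ) * (q ^ (j + 1) - θ ^ 2 / 4)) ≤
        (x / D') * ((E.card : ℝ) * (q ^ (j + 1) - θ ^ 2 / 4)) := by gcongr
    have v4 : x * (E.card * (p * q ^ (j + 1))) ≤ 1 * (E.card * (p * q ^ (j + 1))) := by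
      have : 0 ≤ q ^ (j + 1) := by linarith
      gcongr
    have v5 : x * (E.card / D) * (1 - ((j:ℝ) + 2) * θ ^ 2) ≤ x * (E.card / D) *
      (θ * q ^ (j + 1) + (q ^ (j + 1) - θ ^ 2 / 4) / (q ^ j + θ ^ 2 / 4)) := by gcongr
    have v6 : x * (E.card / D) *
      (θ * q ^ (j + 1) + (q ^ (j + 1) - θ ^ 2 / 4) / (q ^ j + θ ^ 2 / 4)) =
      x * (E.card * (p * q ^ (j + 1))) +
        (x / R) * ((E.card : ℝ) * (q ^ (j + 1) - θ ^ 2 / 4)) := by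
      rw [hR, hpdef, hlam]
      have : q ^ j + θ ^ 2 / 4 ≠ 0 := by positivity
      field_simp
    have v7 : x * (1 - (k + 1) * θ ^ 2) * E.card / D =
        x * (E.card / D) * (1 - ((j:ℝ) + 2) * θ ^ 2) := by
      rw [hkj]; ring
    rw [v7]
    linarith
  obtain ⟨S, hSW, hS⟩ := Ex_exists hp hp1.le total
  refine ⟨Mf S, Ef S, Uf S, D', Finset.filter_subset _ _, Finset.filter_subset _ _,
    Finset.filter_subset _ _, ?_, ?_, ?_, ?_, hDp4, ?_⟩
  · intro e he f hf hef
    obtain ⟨he, heS⟩ := Finset.mem_filter.1 he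
    obtain ⟨hf, hfS⟩ := Finset.mem_filter.1 hf
    rw [Finset.disjoint_left]
    intro v hve hvf
    have h1 : e ∈ S ∩ NS g W (g e) := by rw [heS]; simp
    have h2 : e ∈ S ∩ NS g W (g f) :=
      Finset.mem_inter.2 ⟨(Finset.mem_inter.1 h1).1, memNS e he f hf v hve hvf⟩
    rw [hfS] at h2
    exact hef (Finset.mem_singleton.1 h2)
  · intro e he
    obtain ⟨he, heS⟩ := Finset.mem_filter.1 he
    rw [Finset.disjoint_left]
    intro v hve hvU
    obtain ⟨_, hvd⟩ := Finset.mem_filter.1 hvU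
    have h1 : e ∈ S ∩ NS g W (g e) := by rw [heS]; simp
    exact Finset.disjoint_left.1 hvd (Finset.mem_inter.1 h1).1
      (Finset.mem_filter.2 ⟨h.hEW he, hve⟩)
  · intro e he v hv
    obtain ⟨he, hed, _⟩ := Finset.mem_filter.1 he
    exact Finset.mem_filter.2 ⟨h.hU e he hv,
      hed.mono_right (Finset.subset_biUnion_of_mem (Nb g W) hv)⟩
  · intro v hv
    rcases Finset.eq_empty_or_nonempty (Nb g (Ef S) v) with h0 | ⟨e0, he0⟩
    · rw [h0]; simp
    obtain ⟨he0, hv0⟩ := Finset.mem_filter.1 he0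
    have hY := (Finset.mem_filter.1 he0).2.2 v hv0
    refine Nat.le_floor (le_trans ?_ hY)
    unfold Y
    have e2 : ((Nb g (Ef S) v).card : ℝ) = ∑ e ∈ Nb g (Ef S) v,
        av (NS g W (g e) \ Nb g W v) S := by
      rw [Finset.card_eq_sum_ones]
      push_cast
      refine Finset.sum_congr rfl fun e he => ?_
      obtain ⟨he, _⟩ := Finset.mem_filter.1 he
      have := (Finset.mem_filter.1 he).2.1
      unfold av
      rw [if_pos (this.mono_right Finset.sdiff_subset)]
    rw [e2]
    exact Finset.sum_le_sum_of_subset_of_nonneg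
      (Finset.filter_subset_filter _ (Finset.filter_subset _ _)) fun e _ _ => av_nonneg _ _
  · have : x / D' * ((Ef S).card : ℝ) = x * (Ef S).card / D' := by ring
    rw [← this]; exact hS

end

section

lemma toSetup {ι V : Type} [DecidableEq ι] [DecidableEq V] {g : ι → Finset V} {E : Finset ι}
    {U : Finset V} {D κ k : ℕ} (hk1 : 1 ≤ k) (hk : ∀ e ∈ E, (g e).card = k)
    (hU : ∀ e ∈ E, g e ⊆ U) (hD : ∀ v ∈ U, (Nb g E v).card ≤ D)
    (hκ : ∀ u ∈ U, ∀ v ∈ U, u ≠ v → (Nb g E u ∩ Nb g E v).card ≤ κ) :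
    Setup (Sum.elim g (fun vj : V × ℕ => {vj.1}))
      (E.disjSum ((U ×ˢ range D).filter (fun vj => vj.2 < D - (Nb g E vj.1).card)))
      (E.map Function.Embedding.inl) U D κ k := by
  refine ⟨hk1, ?_, ?_, ?_, ?_, ?_⟩
  · intro a ha
    obtain ⟨e, he, rfl⟩ := Finset.mem_map.1 ha
    exact Finset.inl_mem_disjSum.2 he
  · intro a ha
    obtain ⟨e, he, rfl⟩ := Finset.mem_map.1 ha
    exact hk e he
  · intro a ha
    obtain ⟨e, he, rfl⟩ := Finset.mem_map.1 ha
    exact hU e he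
  · intro v hv
    have e1 : Nb (Sum.elim g (fun vj : V × ℕ => {vj.1}))
      (E.disjSum ((U ×ˢ range D).filter (fun vj => vj.2 < D - (Nb g E vj.1).card))) v =
      (Nb g E v).disjSum ({v} ×ˢ range (D - (Nb g E v).card)) := by
      ext a
      rcases a with e | ⟨u, j⟩
      · simp [Nb]
      · rw [Nb, Finset.mem_filter, Finset.inr_mem_disjSum, Finset.mem_filter,
          Finset.mem_product, Finset.mem_range, Sum.elim_inr, Finset.mem_singleton,
          Finset.inr_mem_disjSum, Finset.mem_product, Finset.mem_range, Finset.mem_singleton]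
        constructor
        · rintro ⟨⟨⟨_, _⟩, h2⟩, rfl⟩
          exact ⟨rfl, h2⟩
        · rintro ⟨h1, h2⟩
          dsimp only at h1 h2 ⊢
          subst h1
          exact ⟨⟨⟨hv, by omega⟩, h2⟩, rfl⟩
    rw [e1, Finset.card_disjSum]
    have := hD v hv
    simp only [Finset.card_product, Finset.card_singleton, Finset.card_range]
    omega
  · intro u hu v hv huv
    refine le_trans ?_ (hκ u hu v hv huv)
    rw [← Finset.card_map (f := (Function.Embedding.inl : ι ↪ ι ⊕ (V × ℕ)))]
    refine Finset.card_le_card ?_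
    intro a ha
    obtain ⟨h1, h2⟩ := Finset.mem_inter.1 ha
    rcases a with e | ⟨w, j⟩
    · refine Finset.mem_map.2 ⟨e, ?_, rfl⟩
      simpa [Nb] using ha
    · exfalso
      have h1 := (Finset.mem_filter.1 h1).2
      have h2 := (Finset.mem_filter.1 h2).2
      simp only [Sum.elim_inr, Finset.mem_singleton] at h1 h2
      exact huv (h1.trans h2.symm)

lemma main_ind (k : ℕ) (hk1 : 1 ≤ k) (θ : ℝ) (hθ : 0 < θ) (hkθ : (k:ℝ) * θ ≤ 1 / 2) (i : ℕ) :
    ∃ η : ℝ, 0 < η ∧ ∀ (ι V : Type) [DecidableEq ι] [DecidableEq V] (g : ι → Finset V)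
      (E : Finset ι) (U : Finset V) (D κ : ℕ), 1 ≤ D → (∀ e ∈ E, (g e).card = k) →
      (∀ e ∈ E, g e ⊆ U) → (∀ v ∈ U, (Nb g E v).card ≤ D) →
      (∀ u ∈ U, ∀ v ∈ U, u ≠ v → (Nb g E u ∩ Nb g E v).card ≤ κ) → (κ : ℝ) ≤ η * D →
      ∃ M, M ⊆ E ∧ (∀ e ∈ M, ∀ f ∈ M, e ≠ f → Disjoint (g e) (g f)) ∧
        (1 - (k + 1) * θ ^ 2) ^ i * E.card / D - (1 - θ / 2) ^ i * U.card ≤ (M.card : ℝ) := by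
  have hk1' : (1:ℝ) ≤ k := by exact_mod_cast hk1
  have hθ2 : θ ≤ 1 / 2 := by nlinarith
  have hx0 : 0 ≤ 1 - ((k:ℝ) + 1) * θ ^ 2 := by nlinarith
  have hx1 : 1 - ((k:ℝ) + 1) * θ ^ 2 ≤ 1 := by nlinarith [sq_nonneg θ]
  have hy0 : 0 ≤ 1 - θ / 2 := by linarith
  induction i with
  | zero =>
    refine ⟨1, one_pos, ?_⟩
    intro ι V _ _ g E U D κ hD hk hU hdeg hκ hη
    refine ⟨∅, by simp, by simp, ?_⟩
    have hs : E ⊆ U.biUnion (Nb g E) := by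
      intro e he
      have : (g e).Nonempty := by
        rw [← Finset.card_pos, hk e he]; exact hk1
      obtain ⟨v, hv⟩ := this
      exact Finset.mem_biUnion.2 ⟨v, hU e he hv, Finset.mem_filter.2 ⟨he, hv⟩⟩
    have hc := (Finset.card_le_card hs).trans (Finset.card_biUnion_le_card_mul _ _ D hdeg)
    have hD0 : (0:ℝ) < D := by exact_mod_cast hD
    have hc' : (E.card : ℝ) ≤ U.card * D := by exact_mod_cast hc
    have := (div_le_iff₀ hD0).2 hc'
    simp only [pow_zero, one_mul, Finset.card_empty, Nat.cast_zero]
    linarith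
  | succ i ih =>
    obtain ⟨η, hη0, ih⟩ := ih
    set ηs : ℝ := θ ^ 2 / (4 * k) * (θ ^ 2 / 4) ^ 2 / (5 * (k:ℝ) ^ 2) with hηs
    have hηs0 : 0 < ηs := by positivity
    refine ⟨min (η / 4) ηs, by positivity, ?_⟩
    intro ι V _ _ g E U D κ hD hk hU hdeg hκ hη
    have hD0 : (0:ℝ) < D := by exact_mod_cast hD
    rcases Nat.lt_or_ge D 2 with h2 | h2
    · obtain rfl : D = 1 := by omega
      refine ⟨E, Finset.Subset.refl _, ?_, ?_⟩
      · intro e he f hf hef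
        rw [Finset.disjoint_left]
        intro v hve hvf
        have := hdeg v (hU e he hve)
        rw [Finset.card_le_one] at this
        exact hef (this e (Finset.mem_filter.2 ⟨he, hve⟩) f (Finset.mem_filter.2 ⟨hf, hvf⟩))
      · have a1 : (1 - ((k:ℝ) + 1) * θ ^ 2) ^ (i + 1) ≤ 1 := pow_le_one₀ hx0 hx1
        have a2 : (1 - ((k:ℝ) + 1) * θ ^ 2) ^ (i + 1) * E.card ≤ 1 * E.card := by gcongr
        have a3 : 0 ≤ (1 - θ / 2) ^ (i + 1) * (U.card : ℝ) := by positivity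
        simp only [Nat.cast_one, div_one]
        linarith
    · have hset := toSetup hk1 hk hU hdeg hκ
      have hκs : (κ : ℝ) ≤ ηs * D := hη.trans (by gcongr; exact min_le_right _ _)
      have hκ4 : (κ : ℝ) ≤ η / 4 * D := hη.trans (by gcongr; exact min_le_left _ _)
      obtain ⟨M, E', U', D', hM0, hE0, hU', hMM, hMU, hEU, hdeg', hDD, hineq⟩ :=
        hset.step h2 hθ hkθ hκs (by rw [hηs]; apply le_of_eq; field_simp)
          (pow_nonneg hx0 i) (pow_le_one₀ hx0 hx1) (pow_nonneg hy0 i)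
      obtain ⟨M, hM, rfl⟩ := Finset.subset_map_iff.1 hM0
      obtain ⟨E', hE', rfl⟩ := Finset.subset_map_iff.1 hE0
      have hDD' : (D:ℝ) ≤ 4 * D' := by exact_mod_cast hDD
      have hNb : ∀ v, Nb g E' v ⊆ Nb g E v := fun v => Finset.filter_subset_filter _ hE'
      obtain ⟨N, hN, hNN, hNc⟩ := ih ι V g E' U' D' κ (by omega) (fun e he => hk e (hE' he))
        (fun e he => hEU _ (Finset.mem_map_of_mem _ he))
        (by
          intro v hv
          refine le_trans ?_ (hdeg' v hv)
          rw [← Finset.card_map (f := (Function.Embedding.inl : ι ↪ ι ⊕ (V × ℕ)))]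
          refine Finset.card_le_card ?_
          intro a ha
          obtain ⟨e, he, rfl⟩ := Finset.mem_map.1 ha
          obtain ⟨he, hve⟩ := Finset.mem_filter.1 he
          exact Finset.mem_filter.2 ⟨Finset.mem_map_of_mem _ he, hve⟩)
        (by
          intro u hu v hv huv
          exact (Finset.card_le_card (Finset.inter_subset_inter (hNb u) (hNb v))).trans
            (hκ u (hU' hu) v (hU' hv) huv))
        (by nlinarith)
      have hMN : ∀ e ∈ M, ∀ f ∈ N, Disjoint (g e) (g f) := by
        intro e he f hf
        exact (hMU _ (Finset.mem_map_of_mem _ he)).mono_right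
          (hEU _ (Finset.mem_map_of_mem _ (hN hf)))
      refine ⟨M ∪ N, Finset.union_subset hM (hN.trans hE'), ?_, ?_⟩
      · intro e he f hf hef
        rcases Finset.mem_union.1 he with he | he <;> rcases Finset.mem_union.1 hf with hf | hf
        · exact hMM _ (Finset.mem_map_of_mem _ he) _ (Finset.mem_map_of_mem _ hf)
            (fun hh => hef (Sum.inl_injective hh))
        · exact hMN e he f hf
        · exact (hMN f hf e he).symm
        · exact hNN e he f hf hef
      · have hdis : Disjoint M N := by
          rw [Finset.disjoint_left]
          intro e he he'
          have := hMN e he e he'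
          rw [disjoint_self, Finset.bot_eq_empty] at this
          have h3 := hk e (hM he)
          rw [this, Finset.card_empty] at h3
          omega
        rw [Finset.card_union_of_disjoint hdis]
        simp only [Finset.card_map] at hineq
        push_cast
        rw [pow_succ _ i, pow_succ _ i]
        linarith

end
end Nib

namespace Nib
lemma params (k : ℕ) (hk1 : 1 ≤ k) (δ : ℝ) (hδ : 0 < δ) :
    ∃ (θ : ℝ) (T : ℕ), 0 < θ ∧ (k:ℝ) * θ ≤ 1 / 2 ∧ (1 - θ / 2) ^ T ≤ δ / 2 ∧
      1 - δ / 2 ≤ (1 - ((k:ℝ) + 1) * θ ^ 2) ^ T := by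
  have hk1' : (1:ℝ) ≤ k := by exact_mod_cast hk1
  obtain ⟨L, hL⟩ := exists_nat_ge (4 / δ)
  have hL0 : (0:ℝ) < L := lt_of_lt_of_le (by positivity) hL
  obtain ⟨s, hs⟩ := exists_nat_ge (max (2 * (k:ℝ)) (2 * L * ((k:ℝ) + 1) / δ))
  have hs1 : 2 * (k:ℝ) ≤ s := (le_max_left _ _).trans hs
  have hs2 : 2 * L * ((k:ℝ) + 1) / δ ≤ s := (le_max_right _ _).trans hs
  have hs0 : (0:ℝ) < s := by linarith
  have hθ0 : (0:ℝ) < 1 / s := by positivity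
  have hkθ : (k:ℝ) * (1 / s) ≤ 1 / 2 := by
    rw [mul_one_div, div_le_iff₀ hs0]; linarith
  have hθ2 : (1:ℝ) / s ≤ 1 / 2 := by nlinarith
  refine ⟨1 / s, s * L, hθ0, hkθ, ?_, ?_⟩
  · have a1 : 1 - (1:ℝ) / s / 2 ≤ Real.exp (-(1 / s / 2)) := by
      linarith [Real.add_one_le_exp (-((1:ℝ) / s / 2))]
    have a2 : (1 - (1:ℝ) / s / 2) ^ (s * L) ≤ Real.exp (-(L / 2)) := by
      calc _ ≤ Real.exp (-(1 / s / 2)) ^ (s * L) := pow_le_pow_left₀ (by linarith) a1 _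
        _ = _ := by
          rw [← Real.exp_nat_mul]; congr 1; push_cast; field_simp
    have a3 : Real.exp (-((L:ℝ) / 2)) ≤ 2 / L := by
      rw [Real.exp_neg, inv_eq_one_div, div_le_div_iff₀ (Real.exp_pos _) hL0]
      linarith [Real.add_one_le_exp ((L:ℝ) / 2)]
    have a4 : 2 / (L:ℝ) ≤ δ / 2 := by
      rw [div_le_iff₀ hδ] at hL
      rw [div_le_div_iff₀ hL0 (by norm_num)]
      linarith
    linarith
  · have hx : ((k:ℝ) + 1) * (1 / s) ^ 2 ≤ 1 := by nlinarith
    have b := one_add_mul_le_pow (a := -(((k:ℝ) + 1) * (1 / s) ^ 2)) (by linarith) (s * L)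
    rw [← sub_eq_add_neg] at b
    refine le_trans ?_ b
    have e : ((s * L : ℕ) : ℝ) * -(((k:ℝ) + 1) * (1 / s) ^ 2) = -(L * (k + 1) / s) := by
      push_cast; field_simp
    rw [e]
    rw [div_le_iff₀ hδ] at hs2
    have : L * ((k:ℝ) + 1) / s ≤ δ / 2 := by
      rw [div_le_div_iff₀ hs0 (by norm_num)]; linarith
    linarith
end Nib

theorem nibble_matching_theorem (k : ℕ) (hk : 1 ≤ k) (δ : ℝ) (hδ : 0 < δ) :
    ∃ n₀ : ℕ, ∃ ε : ℝ, 0 < ε ∧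
      ∀ n : ℕ, n₀ ≤ n →
      ∀ H : Multiset (Finset ℕ),
        (∀ A ∈ H, A ⊆ Finset.range n ∧ A.card = k) →
        0 < ((Finset.range n).sup fun v => Multiset.card (H.filter fun A => v ∈ A)) →
        ∀ c : ℝ, 0 < c →
        ((k : ℝ) * (Multiset.card H : ℝ) / (n : ℝ)) /
            ((((Finset.range n).sup fun v =>
              Multiset.card (H.filter fun A => v ∈ A) : ℕ)) : ℝ) = c →
        (∀ u ∈ Finset.range n, ∀ v ∈ Finset.range n, u ≠ v →
          (Multiset.card (H.filter fun A => u ∈ A ∧ v ∈ A) : ℝ) ≤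
            ε * ((((Finset.range n).sup fun w =>
              Multiset.card (H.filter fun A => w ∈ A) : ℕ)) : ℝ)) →
        ∃ M : Multiset (Finset ℕ), M ≤ H ∧
          M.Pairwise (fun A B => Disjoint A B) ∧
          (c - δ) * (n : ℝ) ≤ ((M.sup).card : ℝ) := by
  have hk' : (0:ℝ) < k := by exact_mod_cast hk
  obtain ⟨θ, T, hθ, hkθ, hT1, hT2⟩ := Nib.params k hk (δ / k) (by positivity)
  obtain ⟨η, hη, main⟩ := Nib.main_ind k hk θ hθ hkθ T
  refine ⟨0, η, hη, ?_⟩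
  intro n _ H hH hpos c hc hcd hcod
  set D := ((Finset.range n).sup fun v => Multiset.card (H.filter fun A => v ∈ A)) with hDdef
  have hD0 : (0:ℝ) < D := by exact_mod_cast hpos
  set l := H.toList with hl
  let g : Fin l.length → Finset ℕ := l.get
  have hHg : H = (Finset.univ : Finset (Fin l.length)).val.map g := by
    rw [Fin.univ_val_map, List.ofFn_get, hl, Multiset.coe_toList]
  have hcard : Multiset.card H = (Finset.univ : Finset (Fin l.length)).card := by
    conv_lhs => rw [hHg]
    rw [Multiset.card_map]; rfl
  have hgH : ∀ e, g e ∈ H := by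
    intro e; rw [hHg]; exact Multiset.mem_map_of_mem _ (Finset.mem_univ e)
  have hfilt : ∀ (P : Finset ℕ → Prop) [DecidablePred P], Multiset.card (H.filter P) =
      ((Finset.univ : Finset (Fin l.length)).filter (fun e => P (g e))).card := by
    intro P _
    conv_lhs => rw [hHg]
    rw [Multiset.filter_map, Multiset.card_map]; rfl
  have hdeg : ∀ v ∈ Finset.range n, (Nib.Nb g Finset.univ v).card ≤ D := by
    intro v hv
    rw [Nib.Nb, ← hfilt (fun A => v ∈ A)]
    exact Finset.le_sup (f := fun v => Multiset.card (H.filter fun A => v ∈ A)) hv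
  have hsub : ∀ e ∈ (Finset.univ : Finset (Fin l.length)), g e ⊆ Finset.range n :=
    fun e _ => (hH _ (hgH e)).1
  have hgk : ∀ e, (g e).card = k := fun e => (hH _ (hgH e)).2
  have hEle : (Multiset.card H : ℝ) ≤ n * D := by
    rw [hcard]
    have hs : (Finset.univ : Finset (Fin l.length)) ⊆
        (Finset.range n).biUnion (Nib.Nb g Finset.univ) := by
      intro e he
      have : (g e).Nonempty := by
        rw [← Finset.card_pos, hgk e]; exact hk
      obtain ⟨v, hv⟩ := this
      exact Finset.mem_biUnion.2 ⟨v, hsub e he hv, Finset.mem_filter.2 ⟨he, hv⟩⟩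
    have hc := (Finset.card_le_card hs).trans (Finset.card_biUnion_le_card_mul _ _ D hdeg)
    rw [Finset.card_range] at hc
    exact_mod_cast hc
  obtain ⟨M, -, hMM, hMc⟩ := main (Fin l.length) ℕ g Finset.univ (Finset.range n) D
    ⌊η * D⌋₊ hpos (fun e _ => hgk e) hsub hdeg
    (by
      intro u hu v hv huv
      refine Nat.le_floor ?_
      have h1 := hcod u hu v hv huv
      rw [hfilt (fun A => u ∈ A ∧ v ∈ A)] at h1
      rw [Nib.Nb, Nib.Nb, ← Finset.filter_and]
      exact h1)
    (Nat.floor_le (by positivity))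
  refine ⟨M.val.map g, ?_, ?_, ?_⟩
  · conv_rhs => rw [hHg]
    exact Multiset.map_le_map (Finset.val_le_iff.2 (Finset.subset_univ M))
  · refine ⟨M.toList.map g, ?_, ?_⟩
    · rw [← Multiset.map_coe, Finset.coe_toList]
    · rw [List.pairwise_map]
      refine List.Pairwise.imp_of_mem ?_ M.nodup_toList
      intro a b ha hb hab
      exact hMM a (Finset.mem_toList.1 ha) b (Finset.mem_toList.1 hb) hab
  · have e1 : (M.val.map g).sup = M.biUnion g := by
      rw [← Finset.sup_eq_biUnion]; rfl
    have e2 : (M.biUnion g).card = M.card * k := by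
      rw [Finset.card_biUnion]
      · simp [hgk]
      · intro a ha b hb hab
        exact hMM a ha b hb hab
    rw [e1, e2]
    rw [← hcard, Finset.card_range] at hMc
    push_cast
    have hn0 : (n:ℝ) ≠ 0 := by
      intro h0
      rw [h0] at hcd
      simp at hcd
      linarith
    have hcn : c * n = k * (Multiset.card H / D) := by
      rw [← hcd]; field_simp
    set r : ℝ := Multiset.card H / D with hr
    have hr0 : 0 ≤ r := by positivity
    have hrn : r ≤ n := by rw [hr, div_le_iff₀ hD0]; exact hEle
    have hnn : (0:ℝ) ≤ n := by positivity
    rw [mul_div_assoc, ← hr] at hMc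
    have b1 := mul_le_mul_of_nonneg_right hT1 hnn
    have b2 := mul_le_mul_of_nonneg_right hT2 hr0
    have hdk : 0 ≤ δ / k / 2 := by positivity
    have b3 := mul_le_mul_of_nonneg_left hrn hdk
    have b4 : r - δ / k * n ≤ M.card := by nlinarith
    have b5 := mul_le_mul_of_nonneg_left b4 hk'.le
    have b6 : (k:ℝ) * (r - δ / k * n) = k * r - δ * n := by field_simp
    nlinarith
end

section
/- Let a, b be positive reals and k₁, k₂ nonnegative integers with k₁ < a and k₂ < b. Then (∏_{i=1}^{k₁}(a−i))·(∏_{i=1}^{k₂}(b−i)) / ∏_{i=1}^{k₁+k₂}(a+b−i) ≤ a^{k₁}·b^{k₂} / (a+b)^{k₁+k₂}. -/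
open Finset

theorem ff_pos (c : ℝ) (k : ℕ) (h : (k : ℝ) < c) :
    0 < ∏ i ∈ Finset.Icc 1 k, (c - (i : ℝ)) := by
  apply Finset.prod_pos
  intro i hi
  have h1 : (i : ℝ) ≤ k := by exact_mod_cast (Finset.mem_Icc.mp hi).2
  linarith

theorem ff_aux (a b : ℝ) (ha : 0 < a) (hb : 0 < b) (n : ℕ) :
    ∀ k₁ k₂ : ℕ, k₁ + k₂ = n → (k₁ : ℝ) < a → (k₂ : ℝ) < b →
    (∏ i ∈ Finset.Icc 1 k₁, (a - (i : ℝ))) * (∏ i ∈ Finset.Icc 1 k₂, (b - (i : ℝ))) *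
      (a + b) ^ n ≤
      a ^ k₁ * b ^ k₂ * ∏ i ∈ Finset.Icc 1 n, (a + b - (i : ℝ)) := by
  induction n with
  | zero =>
    intro k₁ k₂ h _ _
    obtain ⟨rfl, rfl⟩ : k₁ = 0 ∧ k₂ = 0 := by omega
    simp
  | succ n ih =>
    intro k₁ k₂ h h1 h2
    have hn : (k₁ : ℝ) + k₂ = n + 1 := by exact_mod_cast h
    have hP3 : 0 < ∏ i ∈ Finset.Icc 1 n, (a + b - (i : ℝ)) := ff_pos _ _ (by linarith)
    rw [Finset.prod_Icc_succ_top (by omega : 1 ≤ n + 1) (fun i : ℕ => a + b - (i : ℝ))]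
    rcases le_total ((k₂ : ℝ) * a) (k₁ * b) with hc | hc
    · cases k₁ with
      | zero =>
        exfalso
        push_cast at hc hn
        nlinarith [(Nat.cast_nonneg n : (0:ℝ) ≤ n)]
      | succ m =>
        rw [Finset.prod_Icc_succ_top (by omega : 1 ≤ m + 1)]
        have h1' : (m : ℝ) < a := by push_cast at h1; linarith
        have := ih m k₂ (by omega) h1' h2
        have hs : (a - ((m + 1 : ℕ) : ℝ)) * (a + b) ≤ a * (a + b - ((n + 1 : ℕ) : ℝ)) := by
          push_cast at hc hn ⊢
          rw [← hn]
          nlinarith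
        have := mul_le_mul this hs (mul_nonneg (by linarith) (by linarith)) (by positivity)
        calc _ = _ := by ring
          _ ≤ _ := this
          _ = _ := by ring
    · cases k₂ with
      | zero =>
        exfalso
        push_cast at hc hn
        nlinarith [(Nat.cast_nonneg n : (0:ℝ) ≤ n)]
      | succ m =>
        rw [Finset.prod_Icc_succ_top (by omega : 1 ≤ m + 1)]
        have h2' : (m : ℝ) < b := by push_cast at h2; linarith
        have := ih k₁ m (by omega) h1 h2'
        have hs : (b - ((m + 1 : ℕ) : ℝ)) * (a + b) ≤ b * (a + b - ((n + 1 : ℕ) : ℝ)) := by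
          push_cast at hc hn ⊢
          rw [← hn]
          nlinarith
        have := mul_le_mul this hs (mul_nonneg (by linarith) (by linarith)) (by positivity)
        calc _ = _ := by ring
          _ ≤ _ := this
          _ = _ := by ring

theorem falling_factorial_product_inequality (a b : ℝ) (ha : 0 < a) (hb : 0 < b)
    (k₁ k₂ : ℕ) (hk₁ : (k₁ : ℝ) < a) (hk₂ : (k₂ : ℝ) < b) :
    (∏ i ∈ Finset.Icc 1 k₁, (a - (i : ℝ))) * (∏ i ∈ Finset.Icc 1 k₂, (b - (i : ℝ))) /
        ∏ i ∈ Finset.Icc 1 (k₁ + k₂), (a + b - (i : ℝ)) ≤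
      a ^ k₁ * b ^ k₂ / (a + b) ^ (k₁ + k₂) := by
  rw [div_le_div_iff₀ (ff_pos _ _ (by push_cast; linarith)) (by positivity)]
  exact ff_aux a b ha hb _ k₁ k₂ rfl hk₁ hk₂
end
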